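/- Let p be an odd prime, let d and r be positive integers with d > r, let ρ₁, ρ₂, …, ρᵣ be metrics on ℝᵈ each of which induces the standard (Euclidean) topology of ℝᵈ, and fix a sequence t₁, t₂, …, tᵣ with each tᵢ ∈ {1, 2, …, (p−1)/2}. Then there exist p distinct points x₀, x₁, …, x_{p−1} in ℝᵈ, indexed by the field 𝔽_p, such that for each i = 1, …, r the p-gon C_{tᵢ} is ρᵢ-equilateral, i.e. ρᵢ(x₀, x_{tᵢ}) = ρᵢ(x_{tᵢ}, x_{2tᵢ}) = ⋯ = ρᵢ(x_{(p−1)tᵢ}, x₀). -/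

import Mathlib

/-- `ρ` is a metric on `E` that induces the (given) standard topology of `E`. -/
def IsMetricEquivToStd {E : Type*} [TopologicalSpace E] (ρ : E → E → ℝ) : Prop :=
  (∀ x y, ρ x y = ρ y x) ∧
  (∀ x y, ρ x y = 0 ↔ x = y) ∧
  (∀ x y z, ρ x z ≤ ρ x y + ρ y z) ∧
  (∀ s : Set E, IsOpen s ↔ ∀ x ∈ s, ∃ ε > 0, {y | ρ x y < ε} ⊆ s)

/-!
Identify `p`-point configurations in `ℝᵈ` with maps `ZMod p → Fin d → ℝ`, on which `ZMod p` acts by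
rotating the indices. That the gon `C_t` is equilateral means that the side `ρ (x 0, x t)`, as a
function of the configuration `x`, is constant along the orbit of `x`.

Suppose that there is no injective `x` for which all `r` sides are constant along the orbit. Then
every non-constant configuration breaks the rotational symmetry in one of `r + 1` ways: either one
of the `r` functions varies along the orbit, and the set of indices at which it is nearly maximal is
a proper non-empty subset of `ZMod p`; or two points nearly collide, and the partition of the
indices by proximity is a proper non-discrete one. Choosing the scale of proximity according to the
size of the pattern makes the pattern locally constant, which yields an equivariant map to the
iterated join of `r * (p - 1) + (p - 2) ≤ d * (p - 1) - 1` copies of `ZMod p`.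

On the other hand, the points of the simplex on `ZMod p × Fin d` at which each coordinate vanishes
for some index are non-constant configurations, and contain an equivariant image of the join of
`d * (p - 1)` copies of `ZMod p`. This contradicts Dold's form of the Borsuk-Ulam theorem, which is
proved by comparing the periodic resolution of `ZMod p` with the oriented chains of the join.
-/

/-- Ordered simplicial chains with vertices in `α`: formal combinations of lists, a list of length
`n + 1` being an `n`-simplex. The empty list is the simplex of dimension `-1`, so that the chain
complex is augmented. -/
abbrev ListChain (F α : Type*) [CommRing F] : Type _ := List α →₀ F

namespace ListChain

variable {F : Type*} [CommRing F] {α β γ : Type*} {M : Type*} [AddCommGroup M] [Module F M]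

/-- A single simplex, as a chain. -/
noncomputable abbrev of (l : List α) : ListChain F α := Finsupp.single l 1

lemma hom_ext {T T' : ListChain F α →ₗ[F] M} (h : ∀ l, T (of l) = T' (of l)) : T = T' :=
  Finsupp.lhom_ext' fun l ↦ LinearMap.ext_ring (h l)

lemma of_mem_supported {S : Set (List α)} {l : List α} (hl : l ∈ S) :
    of l ∈ Finsupp.supported F F S :=
  Finsupp.single_mem_supported F 1 hl

lemma apply_mem_of_mem_supported {S : Set (List α)} (T : ListChain F α →ₗ[F] M)
    {W : Submodule F M} (h : ∀ l ∈ S, T (of l) ∈ W) {c : ListChain F α}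
    (hc : c ∈ Finsupp.supported F F S) : T c ∈ W := by
  rw [Finsupp.supported_eq_span_single] at hc
  exact Submodule.span_le (p := W.comap T).2 (Set.forall_mem_image.2 h) hc

lemma apply_eq_of_mem_supported {S : Set (List α)} (T T' : ListChain F α →ₗ[F] M)
    (h : ∀ l ∈ S, T (of l) = T' (of l)) {c : ListChain F α}
    (hc : c ∈ Finsupp.supported F F S) : T c = T' c := by
  rw [Finsupp.supported_eq_span_single] at hc
  exact LinearMap.eqOn_span' (Set.forall_mem_image.2 h) hc

/-- The join of a chain with the vertex `a`, placed first. -/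
noncomputable def cons (a : α) : ListChain F α →ₗ[F] ListChain F α :=
  Finsupp.lmapDomain F F (List.cons a)

/-- The chain map induced by a map of vertices. -/
noncomputable def map (f : α → β) : ListChain F α →ₗ[F] ListChain F β :=
  Finsupp.lmapDomain F F (List.map f)

@[simp] lemma cons_of (a : α) (l : List α) : cons a (of l : ListChain F α) = of (a :: l) := by
  simp [cons]

@[simp] lemma map_of (f : α → β) (l : List α) : map f (of l : ListChain F α) = of (l.map f) := by
  simp [map]

lemma map_cons (f : α → β) (a : α) (c : ListChain F α) :
    map f (cons a c) = cons (f a) (map f c) := by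
  have : (map f ∘ₗ cons a : ListChain F α →ₗ[F] _) = cons (f a) ∘ₗ map f := hom_ext fun l ↦ by simp
  exact LinearMap.congr_fun this c

lemma map_map (f : α → β) (g : β → γ) (c : ListChain F α) : map g (map f c) = map (g ∘ f) c := by
  have : (map g ∘ₗ map f : ListChain F α →ₗ[F] _) = map (g ∘ f) := hom_ext fun l ↦ by simp
  exact LinearMap.congr_fun this c

lemma map_id : (map id : ListChain F α →ₗ[F] _) = LinearMap.id :=
  hom_ext fun l ↦ by simp

lemma map_pow (f : α → α) (n : ℕ) : (map f : Module.End F (ListChain F α)) ^ n = map f^[n] := by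
  induction n with
  | zero => exact map_id.symm
  | succ n ih =>
    ext1 c
    rw [pow_succ, Module.End.mul_eq_comp, ih, Function.iterate_succ]
    exact LinearMap.ext fun _ ↦ map_map _ _ _

lemma cons_mem_supported {S T : Set (List α)} {a : α} (h : ∀ l ∈ S, a :: l ∈ T)
    {c : ListChain F α} (hc : c ∈ Finsupp.supported F F S) : cons a c ∈ Finsupp.supported F F T :=
  apply_mem_of_mem_supported _ (fun l hl ↦ by rw [cons_of]; exact of_mem_supported (h l hl)) hc

lemma map_mem_supported {S : Set (List α)} {T : Set (List β)} {f : α → β}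
    (h : ∀ l ∈ S, l.map f ∈ T) {c : ListChain F α} (hc : c ∈ Finsupp.supported F F S) :
    map f c ∈ Finsupp.supported F F T :=
  apply_mem_of_mem_supported _ (fun l hl ↦ by rw [map_of]; exact of_mem_supported (h l hl)) hc

/-- The boundary of a single simplex, expanding along its first vertex. -/
noncomputable def boundaryList : List α → ListChain F α
  | [] => 0
  | a :: l => of l - cons a (boundaryList l)

/-- The boundary operator of the augmented ordered chain complex. -/
noncomputable def boundary : ListChain F α →ₗ[F] ListChain F α :=
  Finsupp.linearCombination F boundaryList

@[simp] lemma boundary_of_nil : boundary (of [] : ListChain F α) = 0 := by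
  simp [boundary, boundaryList]

lemma boundary_cons (a : α) (c : ListChain F α) :
    boundary (cons a c) = c - cons a (boundary c) := by
  have : (boundary ∘ₗ cons a : ListChain F α →ₗ[F] _) = LinearMap.id - cons a ∘ₗ boundary :=
    hom_ext fun l ↦ by simp [boundary, boundaryList]
  exact LinearMap.congr_fun this c

lemma boundary_of_cons (a : α) (l : List α) :
    boundary (of (a :: l) : ListChain F α) = of l - cons a (boundary (of l)) := by
  rw [← cons_of, boundary_cons]

lemma boundary_map (f : α → β) (c : ListChain F α) :
    boundary (map f c) = map f (boundary c) := by
  suffices (boundary ∘ₗ map f : ListChain F α →ₗ[F] _) = map f ∘ₗ boundary from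
    LinearMap.congr_fun this c
  refine hom_ext fun l ↦ ?_
  induction l with
  | nil => simp
  | cons a l ih =>
    simp only [LinearMap.comp_apply, map_of] at ih ⊢
    rw [List.map_cons, boundary_of_cons, ih, boundary_of_cons, map_sub, map_cons, map_of]

lemma boundary_of_mem_supported (l : List α) :
    boundary (of l) ∈ Finsupp.supported F F {s | s.length + 1 = l.length ∧ s ⊆ l} := by
  induction l with
  | nil => simp
  | cons a l ih =>
    rw [boundary_of_cons]
    refine Submodule.sub_mem _ (of_mem_supported (by simp)) (cons_mem_supported ?_ ih)
    rintro s ⟨hlen, hs⟩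
    exact ⟨by simp [hlen], List.cons_subset_cons a hs⟩

/-- The prism over a single simplex. -/
noncomputable def prismList (f g : α → β) : List α → ListChain F β
  | [] => 0
  | a :: l => of (f a :: g a :: l.map g) - cons (f a) (prismList f g l)

/-- The prism operator, a chain homotopy from `map f` to `map g`. -/
noncomputable def prism (f g : α → β) : ListChain F α →ₗ[F] ListChain F β :=
  Finsupp.linearCombination F (prismList f g)

@[simp] lemma prism_of_nil (f g : α → β) : prism f g (of [] : ListChain F α) = 0 := by
  simp [prism, prismList]

lemma prism_of_cons (f g : α → β) (a : α) (l : List α) :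
    prism f g (of (a :: l) : ListChain F α) =
      of (f a :: g a :: l.map g) - cons (f a) (prism f g (of l)) := by
  simp [prism, prismList]

lemma prism_cons (f g : α → β) (a : α) (c : ListChain F α) :
    prism f g (cons a c) = cons (f a) (cons (g a) (map g c)) - cons (f a) (prism f g c) := by
  have : (prism f g ∘ₗ cons a : ListChain F α →ₗ[F] _) =
      cons (f a) ∘ₗ cons (g a) ∘ₗ map g - cons (f a) ∘ₗ prism f g :=
    hom_ext fun l ↦ by simp [prism_of_cons]
  exact LinearMap.congr_fun this c

lemma boundary_prism (f g : α → β) (c : ListChain F α) :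
    boundary (prism f g c) = map g c - map f c - prism f g (boundary c) := by
  suffices (boundary ∘ₗ prism f g : ListChain F α →ₗ[F] _) =
    map g - map f - prism f g ∘ₗ boundary from LinearMap.congr_fun this c
  refine hom_ext fun l ↦ ?_
  induction l with
  | nil => simp
  | cons a l ih =>
    simp only [LinearMap.comp_apply, LinearMap.sub_apply, map_of] at ih ⊢
    rw [prism_of_cons, map_sub, boundary_of_cons, boundary_of_cons, boundary_cons, ih,
      boundary_of_cons, map_sub (prism (F := F) f g), prism_cons, ← boundary_map]
    simp only [map_sub, map_of, cons_of, List.map_cons]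
    abel

lemma prism_of_mem_supported (f g : α → β) (l : List α) :
    prism f g (of l) ∈ Finsupp.supported F F
      {s | s.length = l.length + 1 ∧ ∀ b ∈ s, ∃ a ∈ l, b = f a ∨ b = g a} := by
  induction l with
  | nil => simp
  | cons a l ih =>
    rw [prism_of_cons]
    refine Submodule.sub_mem _ (of_mem_supported ?_) (cons_mem_supported ?_ ih)
    · refine ⟨by simp, fun b hb ↦ ?_⟩
      simp only [List.mem_cons, List.mem_map] at hb
      rcases hb with rfl | rfl | ⟨a', ha', rfl⟩
      · exact ⟨a, by simp⟩
      · exact ⟨a, by simp⟩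
      · exact ⟨a', by simp [ha']⟩
    · rintro s ⟨hlen, hs⟩
      refine ⟨by simp [hlen], fun b hb ↦ ?_⟩
      rcases List.mem_cons.1 hb with rfl | hb
      · exact ⟨a, by simp⟩
      · obtain ⟨a', ha', h⟩ := hs b hb
        exact ⟨a', by simp [ha'], h⟩

lemma boundary_sum_prism (h : ℕ → α → β) (m : ℕ) {z : ListChain F α} (hz : boundary z = 0) :
    boundary (∑ i ∈ Finset.range m, prism (h i) (h (i + 1)) z) = map (h m) z - map (h 0) z := by
  simp only [map_sum, boundary_prism, hz, map_zero, sub_zero]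
  exact Finset.sum_range_sub (fun i ↦ map (h i) z) m

end ListChain

section PeriodicResolution

variable {F : Type*} [CommRing F] {M M₂ : Type*} [AddCommGroup M] [Module F M] [AddCommGroup M₂]
  [Module F M₂] {p : ℕ} {g : Module.End F M} {g' : Module.End F M₂}

/-- The differentials of the periodic resolution of a cyclic group of order `p` with generator `g`:
the norm `1 + g + ⋯ + g ^ (p - 1)` in even degrees and `g - 1` in odd degrees. -/
noncomputable def periodicDiff (p : ℕ) (g : Module.End F M) (n : ℕ) : Module.End F M :=
  if Even n then ∑ i ∈ Finset.range p, g ^ i else g - 1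

lemma periodicDiff_succ_apply_periodicDiff (hg : g ^ p = 1) (n : ℕ) (x : M) :
    periodicDiff p g (n + 1) (periodicDiff p g n x) = 0 := by
  rw [← Module.End.mul_apply]
  by_cases hn : Even n
  · simp [periodicDiff, hn, Nat.even_add_one, mul_geom_sum, hg]
  · simp [periodicDiff, hn, Nat.even_add_one, geom_sum_mul, hg]

lemma periodicDiff_add_two (g : Module.End F M) (n : ℕ) :
    periodicDiff p g (n + 2) = periodicDiff p g n := by
  simp [periodicDiff, Nat.even_add]

lemma map_periodicDiff {T : M →ₗ[F] M₂} (h : ∀ x, T (g x) = g' (T x)) (n : ℕ) (x : M) :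
    T (periodicDiff p g n x) = periodicDiff p g' n (T x) := by
  have hpow (i : ℕ) : T ((g ^ i) x) = (g' ^ i) (T x) := by
    induction i with
    | zero => rfl
    | succ i ih => rw [pow_succ', pow_succ', Module.End.mul_apply, Module.End.mul_apply, h, ih]
  by_cases hn : Even n
  · simp [periodicDiff, hn, hpow]
  · simp [periodicDiff, hn, h]

lemma periodicDiff_mem {S : Submodule F M} (hS : ∀ x ∈ S, g x ∈ S) (n : ℕ) {x : M} (hx : x ∈ S) :
    periodicDiff p g n x ∈ S := by
  have := map_periodicDiff (p := p) (g := g.restrict hS) (T := S.subtype) (fun _ ↦ rfl) n ⟨x, hx⟩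
  exact this ▸ Subtype.property _

lemma map_periodicDiff_of_mem {S : Submodule F M} (hS : ∀ x ∈ S, g x ∈ S) {T : M →ₗ[F] M₂}
    (h : ∀ x ∈ S, T (g x) = g' (T x)) (n : ℕ) {x : M} (hx : x ∈ S) :
    T (periodicDiff p g n x) = periodicDiff p g' n (T x) := by
  have hT := map_periodicDiff (p := p) (g := g.restrict hS) (T := T.domRestrict S)
    (fun y ↦ h y y.2) n ⟨x, hx⟩
  have hcoe := map_periodicDiff (p := p) (g := g.restrict hS) (T := S.subtype) (fun _ ↦ rfl) n
    ⟨x, hx⟩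
  exact (congrArg T hcoe).symm.trans hT

/-- The element `P` behaves like the projection to a fundamental domain of the action of `g`: if the
translates of `P` sum to the identity, then the module is induced and the resolution stays exact. -/
lemma exists_periodicDiff_succ_eq (hg : g ^ p = 1) {P : Module.End F M}
    (hP : ∑ i ∈ Finset.range p, g ^ i * P * g ^ (p - i) = 1) (n : ℕ) {x : M}
    (hx : periodicDiff p g n x = 0) : ∃ y, periodicDiff p g (n + 1) y = x := by
  by_cases hn : Even n
  · have hnorm : ∑ i ∈ Finset.range p, g ^ (p - i) = ∑ i ∈ Finset.range p, g ^ i := by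
      have hrefl := Finset.sum_range_reflect (fun i ↦ g ^ i) (p + 1)
      rw [Finset.sum_range_succ, Finset.sum_range_succ] at hrefl
      simpa [hg] using hrefl
    let H := ∑ i ∈ Finset.range p, (∑ j ∈ Finset.range i, g ^ j) * P * g ^ (p - i)
    have hH : (g - 1) * H = (∑ i ∈ Finset.range p, g ^ i * P * g ^ (p - i)) -
        P * ∑ i ∈ Finset.range p, g ^ (p - i) := by
      rw [Finset.mul_sum, Finset.mul_sum, ← Finset.sum_sub_distrib]
      refine Finset.sum_congr rfl fun i _ ↦ ?_
      rw [← mul_assoc, ← mul_assoc, mul_geom_sum, sub_mul, sub_mul, one_mul]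
    replace hH : (g - 1) * H = 1 - P * periodicDiff p g n := by
      rw [hH, hP, hnorm, periodicDiff, if_pos hn]
    refine ⟨H x, ?_⟩
    rw [periodicDiff, if_neg (by simpa [Nat.even_add_one] using hn), ← Module.End.mul_apply, hH,
      LinearMap.sub_apply, Module.End.mul_apply, hx, map_zero, sub_zero, Module.End.one_apply]
  · have hfix : g x = x := by simpa [periodicDiff, hn, sub_eq_zero] using hx
    have hpow (i : ℕ) : (g ^ i) x = x := by
      rw [Module.End.pow_apply]
      exact Function.iterate_fixed hfix i
    refine ⟨P x, ?_⟩
    simpa [periodicDiff, hn, Nat.even_add_one, LinearMap.sum_apply, hpow] using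
      LinearMap.congr_fun hP x

lemma exists_periodicDiff_succ_eq_of_mem {S : Submodule F M} (hS : ∀ x ∈ S, g x ∈ S)
    (hg : ∀ x ∈ S, (g ^ p) x = x) {P : Module.End F M} (hPS : ∀ x ∈ S, P x ∈ S)
    (hP : ∀ x ∈ S, ∑ i ∈ Finset.range p, (g ^ i) (P ((g ^ (p - i)) x)) = x) (n : ℕ) {x : M}
    (hxS : x ∈ S) (hx : periodicDiff p g n x = 0) : ∃ y ∈ S, periodicDiff p g (n + 1) y = x := by
  have hcoe (n : ℕ) (y : S) : (periodicDiff p (g.restrict hS) n y : M) = periodicDiff p g n y :=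
    map_periodicDiff (T := S.subtype) (fun _ ↦ rfl) n y
  have hpow (i : ℕ) (y : S) : ((g.restrict hS ^ i) y : M) = (g ^ i) y := by
    rw [Module.End.pow_restrict]
    rfl
  obtain ⟨y, hy⟩ := exists_periodicDiff_succ_eq (g := g.restrict hS) (P := P.restrict hPS)
    (LinearMap.ext fun y ↦ Subtype.ext <| (hpow p y).trans (hg y y.2))
    (LinearMap.ext fun y ↦ Subtype.ext <| by
      simpa [LinearMap.sum_apply, hpow] using hP y y.2)
    n (x := ⟨x, hxS⟩) (Subtype.ext <| (hcoe n _).trans hx)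
  exact ⟨y, y.2, by rw [← hcoe, hy]⟩

/-- Descent along the staircase of a double complex: the columns are exact in the direction of
`periodicDiff`, so the vanishing of `d N` can be transported down to `d 0`. -/
lemma exists_eq_add_periodicDiff_one {b : Module.End F M} (hb : ∀ x, b (b x) = 0)
    (hbg : ∀ x, b (g x) = g (b x)) {S : ℕ → Submodule F M} (hbS : ∀ n, ∀ x ∈ S (n + 1), b x ∈ S n)
    (hS : ∀ n, ∀ x ∈ S n, periodicDiff p g n x = 0 → ∃ y ∈ S n, periodicDiff p g (n + 1) y = x)
    {d : ℕ → M} {N : ℕ} (hd : ∀ n ≤ N, d n ∈ S n) (hN : d N = 0)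
    (hbd : ∀ n < N, b (d (n + 1)) = periodicDiff p g n (d n)) :
    ∃ x, ∃ y ∈ S 0, d 0 = b x + periodicDiff p g 1 y := by
  suffices ∀ n ≤ N, ∃ x, ∃ y ∈ S n, d n = b x + periodicDiff p g (n + 1) y from
    this 0 N.zero_le
  intro n hn
  induction hn using Nat.decreasingInduction with
  | self => exact ⟨0, 0, zero_mem _, by simp [hN]⟩
  | of_succ n hn ih =>
    obtain ⟨x, y, hy, hxy⟩ := ih
    have hzero : periodicDiff p g n (d n - b y) = 0 := by
      rw [map_sub, ← hbd n hn, hxy, map_add, hb, zero_add, periodicDiff_add_two,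
        map_periodicDiff hbg, sub_self]
    obtain ⟨y', hy', hdy⟩ := hS n _ (sub_mem (hd n hn.le) (hbS n y hy)) hzero
    exact ⟨y, y', hy', by rw [hdy]; abel⟩

end PeriodicResolution

section ConeTower

variable {F : Type*} [CommRing F] {E : Type*}

/-- Lists of length `n` of points of `A` at mutual distance less than `δ`. -/
def smallLists [PseudoMetricSpace E] (A : Set E) (n : ℕ) (δ : ℝ) : Set (List E) :=
  {l | l.length = n ∧ (∀ x ∈ l, x ∈ A) ∧ ∀ x ∈ l, ∀ y ∈ l, dist x y < δ}

lemma smallLists_mono [PseudoMetricSpace E] {A B : Set E} (h : A ⊆ B) {n : ℕ} {δ : ℝ} :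
    smallLists A n δ ⊆ smallLists B n δ :=
  fun _ hl ↦ ⟨hl.1, fun x hx ↦ h (hl.2.1 x hx), hl.2.2⟩

lemma map_mem_smallLists [PseudoMetricSpace E] {g : E → E} (hg : Isometry g) {A : Set E}
    (hA : Set.MapsTo g A A) {n : ℕ} {δ : ℝ} {l : List E} (hl : l ∈ smallLists A n δ) :
    l.map g ∈ smallLists A n δ := by
  obtain ⟨hlen, hlA, hlδ⟩ := hl
  simp only [smallLists, Set.mem_ofPred_eq, List.length_map, List.mem_map, forall_exists_index,
    and_imp, forall_apply_eq_imp_iff₂, hg.dist_eq]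
  exact ⟨hlen, fun x hx ↦ hA (hlA x hx), hlδ⟩

lemma cons_map_const_mem_supported [PseudoMetricSpace E] {B : Set E} {v : E} (hv : v ∈ B)
    {n : ℕ} {δ : ℝ} (hδ : 0 < δ) {S : Set (List E)} (hS : ∀ l ∈ S, l.length = n)
    {z : ListChain F E} (hz : z ∈ Finsupp.supported F F S) :
    ListChain.cons v (ListChain.map (fun _ ↦ v) z) ∈
      Finsupp.supported F F (smallLists B (n + 1) δ) := by
  refine ListChain.cons_mem_supported (fun l hl ↦ ?_)
    (ListChain.map_mem_supported (T := {l | l.length = n ∧ ∀ x ∈ l, x = v})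
      (fun l hl ↦ by simp [hS l hl]) hz)
  have hvl : ∀ x ∈ v :: l, x = v := by simpa using hl.2
  refine ⟨by simp [hl.1], fun x hx ↦ hvl x hx ▸ hv, fun x hx y hy ↦ ?_⟩
  rwa [hvl x hx, hvl y hy, dist_self]

variable [SeminormedAddCommGroup E] [NormedSpace ℝ E]

lemma dist_lineMap_lineMap_le (a b v : E) {s : ℝ} (hs : s ∈ Set.Icc (0 : ℝ) 1) (t : ℝ) :
    dist (AffineMap.lineMap a v s) (AffineMap.lineMap b v t) ≤ dist a b + |s - t| * dist b v := by
  have hpar : dist (AffineMap.lineMap a v s) (AffineMap.lineMap b v s) = |1 - s| * dist a b := by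
    simp only [AffineMap.lineMap_apply_module, dist_eq_norm]
    rw [add_sub_add_right_eq_sub, ← smul_sub, norm_smul, Real.norm_eq_abs]
  have hle : |1 - s| ≤ 1 := by
    rw [abs_of_nonneg (sub_nonneg.2 hs.2)]
    linarith [hs.1]
  calc dist (AffineMap.lineMap a v s) (AffineMap.lineMap b v t)
      ≤ dist (AffineMap.lineMap a v s) (AffineMap.lineMap b v s) +
        dist (AffineMap.lineMap b v s) (AffineMap.lineMap b v t) := dist_triangle _ _ _
    _ = |1 - s| * dist a b + |s - t| * dist b v := by
        rw [hpar, dist_lineMap_lineMap, Real.dist_eq]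
    _ ≤ dist a b + |s - t| * dist b v := by
        gcongr
        exact mul_le_of_le_one_left dist_nonneg hle

lemma prism_lineMap_mem_supported {A B : Set E} {v : E} {K : ℝ} (hK : ∀ x ∈ A, dist x v ≤ K)
    (hAB : ∀ x ∈ A, segment ℝ x v ⊆ B) {s t : ℝ} (hs : s ∈ Set.Icc (0 : ℝ) 1)
    (ht : t ∈ Set.Icc (0 : ℝ) 1) {n : ℕ} {δ δ' : ℝ} (hδ : δ + |s - t| * K ≤ δ')
    {z : ListChain F E} (hz : z ∈ Finsupp.supported F F (smallLists A n δ)) :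
    ListChain.prism (fun x ↦ AffineMap.lineMap x v s) (fun x ↦ AffineMap.lineMap x v t) z ∈
      Finsupp.supported F F (smallLists B (n + 1) δ') := by
  refine ListChain.apply_mem_of_mem_supported _ (fun l hl ↦ ?_) hz
  refine Finsupp.supported_mono ?_ (ListChain.prism_of_mem_supported _ _ l)
  obtain ⟨hlen, hlA, hlδ⟩ := hl
  rintro w ⟨hw, hwl⟩
  have hwl' : ∀ b ∈ w, ∃ a ∈ l, ∃ u ∈ ({s, t} : Set ℝ), b = AffineMap.lineMap a v u := by
    simpa using hwl
  have hst : ({s, t} : Set ℝ) ⊆ Set.Icc 0 1 := by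
    rintro u (rfl | rfl) <;> assumption
  refine ⟨by rw [hw, hlen], fun b hb ↦ ?_, fun b hb b' hb' ↦ ?_⟩
  · obtain ⟨a, ha, u, hu, rfl⟩ := hwl' b hb
    exact hAB a (hlA a ha) (lineMap_mem_segment _ _ _ (hst hu))
  · obtain ⟨a, ha, u, hu, rfl⟩ := hwl' b hb
    obtain ⟨a', ha', u', hu', rfl⟩ := hwl' b' hb'
    have hdiff : |u - u'| ≤ |s - t| := by
      rcases hu with rfl | rfl <;> rcases hu' with rfl | rfl <;> simp [abs_sub_comm]
    calc _ ≤ dist a a' + |u - u'| * dist a' v := dist_lineMap_lineMap_le a a' v (hst hu) u'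
      _ ≤ dist a a' + |s - t| * K := by
        gcongr
        exact hK a' (hlA a' ha')
      _ < δ + |s - t| * K := by
        gcongr
        exact hlδ a ha a' ha'
      _ ≤ δ' := hδ

lemma exists_boundary_eq_of_cone {A B : Set E} {v : E} (hA : Bornology.IsBounded A) (hv : v ∈ B)
    (hAB : ∀ x ∈ A, segment ℝ x v ⊆ B) {n : ℕ} {δ δ' : ℝ} (hδ : 0 < δ) (hδ' : δ < δ')
    {z : ListChain F E} (hz : z ∈ Finsupp.supported F F (smallLists A n δ))
    (hbz : ListChain.boundary z = 0) :
    ∃ c ∈ Finsupp.supported F F (smallLists B (n + 1) δ'), ListChain.boundary c = z := by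
  obtain ⟨r, hr⟩ := hA.subset_closedBall v
  obtain ⟨m, hm0, hm⟩ : ∃ m : ℕ, 0 < m ∧ r / (δ' - δ) < m :=
    ⟨⌊r / (δ' - δ)⌋₊ + 1, Nat.succ_pos _, by exact_mod_cast Nat.lt_floor_add_one _⟩
  have hm0' : (0 : ℝ) < m := Nat.cast_pos.2 hm0
  have hstep (i : ℕ) : δ + |(i : ℝ) / m - (i + 1 : ℕ) / m| * r ≤ δ' := by
    have habs : |(i : ℝ) / m - (i + 1 : ℕ) / m| = 1 / m := by
      rw [← sub_div, Nat.cast_add_one, sub_add_cancel_left, neg_div, abs_neg,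
        abs_of_pos (by positivity)]
    rw [div_lt_comm₀ (sub_pos.2 hδ') hm0', lt_sub_iff_add_lt'] at hm
    rw [habs, one_div_mul_eq_div]
    exact hm.le
  have hIcc {i : ℕ} (hi : i ≤ m) : (i : ℝ) / m ∈ Set.Icc (0 : ℝ) 1 :=
    ⟨by positivity, div_le_one_of_le₀ (Nat.cast_le.2 hi) hm0'.le⟩
  let h (i : ℕ) (x : E) : E := AffineMap.lineMap x v ((i : ℝ) / m)
  have h_zero : h 0 = id := by ext x; simp [h]
  have h_last : h m = fun _ ↦ v := by ext x; simp [h, hm0.ne']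
  let apex : ListChain F E := ListChain.map (fun _ ↦ v) z
  have hapex : ListChain.boundary (ListChain.cons v apex) = apex := by
    rw [ListChain.boundary_cons, ListChain.boundary_map, hbz, map_zero, map_zero, sub_zero]
  refine ⟨ListChain.cons v apex - ∑ i ∈ Finset.range m, ListChain.prism (h i) (h (i + 1)) z,
    Submodule.sub_mem _ ?_ (Submodule.sum_mem _ fun i hi ↦ ?_), ?_⟩
  · exact cons_map_const_mem_supported hv (hδ.trans hδ') (fun l hl ↦ hl.1) hz
  · exact prism_lineMap_mem_supported (fun x hx ↦ hr hx) hAB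
      (hIcc (Finset.mem_range.1 hi).le) (hIcc (Finset.mem_range.1 hi)) (hstep i) hz
  · rw [map_sub, hapex, ListChain.boundary_sum_prism h m hbz, h_zero, h_last, ListChain.map_id]
    simp [apex]

/-- A tower of bounded `g`-invariant sets, each of which contains a cone over the preceding one:
a geometric model of the iterated join of copies of a `g`-orbit. The point `v (n + 1)` is the apex
of the cone over `A n`. -/
structure IsConeTower (g : E → E) (A : ℕ → Set E) (v : ℕ → E) : Prop where
  mapsTo (n : ℕ) : Set.MapsTo g (A n) (A n)
  isBounded (n : ℕ) : Bornology.IsBounded (A n)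
  apex_mem (n : ℕ) : v n ∈ A n
  segment_subset (n : ℕ) : ∀ x ∈ A n, segment ℝ x (v (n + 1)) ⊆ A (n + 1)

lemma IsConeTower.monotone {g : E → E} {A : ℕ → Set E} {v : ℕ → E} (h : IsConeTower g A v) :
    Monotone A :=
  monotone_nat_of_le_succ fun n x hx ↦ h.segment_subset n x hx (left_mem_segment ℝ x (v (n + 1)))

/-- The chains `c n` are the images of the generators of the periodic resolution under a chain map
into the complex of small chains. -/
lemma IsConeTower.exists_resolution {p : ℕ} (hp : (p : F) = 0) {g : E → E} (hg : g^[p] = id)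
    (hgi : Isometry g) {A : ℕ → Set E} {v : ℕ → E} (hA : IsConeTower g A v) {δ : ℝ} (hδ : 0 < δ) :
    ∃ c : ℕ → ListChain F E, c 0 = ListChain.of [v 0] ∧
      (∀ n, c n ∈ Finsupp.supported F F (smallLists (A n) (n + 1) δ)) ∧
      ∀ n, ListChain.boundary (c (n + 1)) = periodicDiff p (ListChain.map g) n (c n) := by
  have hgp : (ListChain.map g : Module.End F (ListChain F E)) ^ p = 1 := by
    rw [ListChain.map_pow, hg]
    exact ListChain.map_id
  obtain ⟨η, hη_mono, hη, -⟩ := exists_seq_strictMono_tendsto' hδ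
  let IsStage (n : ℕ) (c : ListChain F E) : Prop :=
    c ∈ Finsupp.supported F F (smallLists (A n) (n + 1) (η n)) ∧
      ListChain.boundary (periodicDiff p (ListChain.map g) n c) = 0
  have hstage_zero : IsStage 0 (ListChain.of [v 0]) := by
    refine ⟨ListChain.of_mem_supported ?_, ?_⟩
    · simp [smallLists, hA.apex_mem 0, (hη 0).1]
    · rw [map_periodicDiff (ListChain.boundary_map g), ListChain.boundary_of_cons]
      simp [periodicDiff, ListChain.map_pow, Finsupp.smul_single, hp]
  have hstage_succ (n : ℕ) (c : {c // IsStage n c}) : ∃ c' : {c // IsStage (n + 1) c},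
      ListChain.boundary c'.1 = periodicDiff p (ListChain.map g) n c.1 := by
    obtain ⟨c, hc, hbc⟩ := c
    obtain ⟨c', hc', hbc'⟩ := exists_boundary_eq_of_cone (hA.isBounded n) (hA.apex_mem (n + 1))
      (hA.segment_subset n) (hη n).1 (hη_mono n.lt_succ_self)
      (periodicDiff_mem (fun _ ↦ ListChain.map_mem_supported
        fun l ↦ map_mem_smallLists hgi (hA.mapsTo n)) n hc) hbc
    refine ⟨⟨c', hc', ?_⟩, hbc'⟩
    rw [map_periodicDiff (ListChain.boundary_map g), hbc',
      periodicDiff_succ_apply_periodicDiff hgp]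
  choose next hnext using hstage_succ
  let c (n : ℕ) : {c // IsStage n c} := Nat.rec ⟨_, hstage_zero⟩ next n
  refine ⟨fun n ↦ (c n).1, rfl, fun n ↦ Finsupp.supported_mono ?_ (c n).2.1,
    fun n ↦ hnext n (c n)⟩
  exact fun l ⟨hlen, hlA, hlη⟩ ↦ ⟨hlen, hlA, fun x hx y hy ↦ (hlη x hx y hy).trans (hη n).2⟩

end ConeTower

section ExteriorChain

open ExteriorAlgebra

variable {F : Type*} [CommRing F] {β γ : Type*}

/-- The oriented simplex with the given vertices, encoded as an exterior product. Unlike ordered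
simplices, oriented ones vanish when a vertex is repeated. -/
noncomputable def wedge (F : Type*) [CommRing F] (s : List β) : ExteriorAlgebra F (β →₀ F) :=
  (s.map fun b ↦ ι F (Finsupp.single b 1)).prod

@[simp] lemma wedge_nil : wedge F ([] : List β) = 1 := rfl

lemma wedge_cons (b : β) (s : List β) :
    wedge F (b :: s) = ι F (Finsupp.single b 1) * wedge F s := by
  simp [wedge]

lemma wedge_eq_zero_of_not_nodup {s : List β} (hs : ¬ s.Nodup) : wedge F s = 0 := by
  have h := ιMulti_eq_zero_of_not_inj (R := F) (v := fun i ↦ Finsupp.single (s.get i) (1 : F))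
    fun h ↦ hs (List.nodup_iff_injective_get.2 (h.of_comp (f := fun b ↦ Finsupp.single b (1 : F))))
  rwa [ιMulti_apply, show List.ofFn (fun i ↦ ι F (Finsupp.single (s.get i) (1 : F))) = _ from
    List.ofFn_getElem_eq_map s fun b ↦ ι F (Finsupp.single b (1 : F))] at h

/-- The passage from ordered to oriented simplices. -/
noncomputable def orient : ListChain F β →ₗ[F] ExteriorAlgebra F (β →₀ F) :=
  Finsupp.linearCombination F (wedge F)

@[simp] lemma orient_of (s : List β) : orient (ListChain.of s) = wedge F s := by
  simp [orient]

/-- The boundary operator of the augmented oriented chain complex, namely the contraction with the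
linear form that takes the value `1` at every vertex. -/
noncomputable def orientedBoundary : Module.End F (ExteriorAlgebra F (β →₀ F)) :=
  CliffordAlgebra.contractLeft (Finsupp.linearCombination F fun _ ↦ (1 : F))

lemma orientedBoundary_orientedBoundary (x : ExteriorAlgebra F (β →₀ F)) :
    orientedBoundary (orientedBoundary x) = 0 :=
  CliffordAlgebra.contractLeft_contractLeft ..

lemma orientedBoundary_ι_mul (v : β →₀ F) (x : ExteriorAlgebra F (β →₀ F)) :
    orientedBoundary (ι F v * x) =
      Finsupp.linearCombination F (fun _ ↦ (1 : F)) v • x - ι F v * orientedBoundary x :=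
  CliffordAlgebra.contractLeft_ι_mul ..

lemma orientedBoundary_one : orientedBoundary (1 : ExteriorAlgebra F (β →₀ F)) = 0 :=
  CliffordAlgebra.contractLeft_one ..

lemma orientedBoundary_wedge_singleton (b : β) : orientedBoundary (wedge F [b]) = 1 := by
  rw [wedge_cons, orientedBoundary_ι_mul, wedge_nil, orientedBoundary_one]
  simp

lemma orientedBoundary_orient (c : ListChain F β) :
    orientedBoundary (orient c) = orient (ListChain.boundary c) := by
  suffices (orientedBoundary ∘ₗ orient : ListChain F β →ₗ[F] _) = orient ∘ₗ ListChain.boundary from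
    LinearMap.congr_fun this c
  have horient (b : β) (c : ListChain F β) :
      orient (ListChain.cons b c) = ι F (Finsupp.single b 1) * orient c := by
    have : (orient ∘ₗ ListChain.cons b : ListChain F β →ₗ[F] _) =
        LinearMap.mulLeft F (ι F (Finsupp.single b 1)) ∘ₗ orient :=
      ListChain.hom_ext fun s ↦ by simp [wedge_cons]
    exact LinearMap.congr_fun this c
  refine ListChain.hom_ext fun s ↦ ?_
  induction s with
  | nil => simp [orientedBoundary_one]
  | cons b s ih =>
    simp only [LinearMap.comp_apply, orient_of] at ih ⊢
    rw [wedge_cons, orientedBoundary_ι_mul, ih, ListChain.boundary_of_cons, map_sub, horient]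
    simp

/-- The chain map of oriented chains induced by a map of vertices. -/
noncomputable def relabel (f : β → γ) :
    ExteriorAlgebra F (β →₀ F) →ₗ[F] ExteriorAlgebra F (γ →₀ F) :=
  (ExteriorAlgebra.map (Finsupp.lmapDomain F F f)).toLinearMap

@[simp] lemma relabel_wedge (f : β → γ) (s : List β) :
    relabel f (wedge F s) = wedge F (s.map f) := by
  simp [relabel, wedge, map_list_prod, Function.comp_def]

lemma relabel_pow_wedge (f : β → β) (n : ℕ) (s : List β) :
    (relabel f ^ n) (wedge F s) = wedge F (s.map f^[n]) := by
  induction n generalizing s with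
  | zero => simp
  | succ n ih =>
    rw [pow_succ, Module.End.mul_apply, relabel_wedge, ih, List.map_map, Function.iterate_succ]

lemma orientedBoundary_relabel (f : β → γ) (x : ExteriorAlgebra F (β →₀ F)) :
    orientedBoundary (relabel f x) = relabel f (orientedBoundary x) := by
  induction x using CliffordAlgebra.left_induction with
  | algebraMap r =>
    have hone : relabel f (1 : ExteriorAlgebra F (β →₀ F)) = 1 := relabel_wedge f []
    simp [Algebra.algebraMap_eq_smul_one, orientedBoundary_one, hone]
  | add x y hx hy => simp [hx, hy]
  | ι_mul x v hx =>
    have hmul (v : β →₀ F) (x : ExteriorAlgebra F (β →₀ F)) :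
        relabel f (ι F v * x) = ι F (Finsupp.lmapDomain F F f v) * relabel f x := by
      simp [relabel]
    have hsum : Finsupp.linearCombination F (fun _ ↦ (1 : F)) (Finsupp.lmapDomain F F f v) =
        Finsupp.linearCombination F (fun _ ↦ (1 : F)) v := by
      simp [Finsupp.linearCombination_mapDomain, Function.comp_def]
    change orientedBoundary (relabel f (ι F v * x)) = relabel f (orientedBoundary (ι F v * x))
    rw [hmul, orientedBoundary_ι_mul, orientedBoundary_ι_mul, map_sub, map_smul, hmul, hx, hsum]

open Classical in
/-- The projection of oriented chains that discards the simplices with a vertex outside `Q`. -/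
noncomputable def restrictTo (Q : β → Prop) : Module.End F (ExteriorAlgebra F (β →₀ F)) :=
  (ExteriorAlgebra.map (Finsupp.linearCombination F fun b ↦
    if Q b then Finsupp.single b (1 : F) else 0)).toLinearMap

open Classical in
lemma restrictTo_wedge_cons (Q : β → Prop) (b : β) (s : List β) :
    restrictTo Q (wedge F (b :: s)) =
      (if Q b then ι F (Finsupp.single b 1) else 0) * restrictTo Q (wedge F s) := by
  rw [wedge_cons, restrictTo, AlgHom.toLinearMap_apply, map_mul, map_apply_ι,
    Finsupp.linearCombination_single, one_smul, apply_ite (ι F), map_zero]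
  rfl

lemma restrictTo_wedge_of_forall {Q : β → Prop} {s : List β} (h : ∀ b ∈ s, Q b) :
    restrictTo Q (wedge F s) = wedge F s := by
  induction s with
  | nil => simp [restrictTo]
  | cons b s ih =>
    rw [List.forall_mem_cons] at h
    rw [restrictTo_wedge_cons, if_pos h.1, ih h.2, wedge_cons]

lemma restrictTo_wedge_of_mem {Q : β → Prop} {s : List β} {b : β} (hb : b ∈ s) (h : ¬ Q b) :
    restrictTo Q (wedge F s) = 0 := by
  induction s with
  | nil => simp at hb
  | cons c s ih =>
    rw [restrictTo_wedge_cons]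
    rcases List.mem_cons.1 hb with rfl | hb
    · rw [if_neg h, zero_mul]
    · rw [ih hb, mul_zero]

end ExteriorChain

section JoinComplex

variable {F : Type*} [CommRing F] {p M : ℕ}

/-- The generator of the cyclic group acting on the vertices of the `M`-fold join of copies of
`ZMod p`. A vertex is a pair: a point of `ZMod p`, and the number of the copy it belongs to. -/
def shiftVertex (a : ZMod p × ℕ) : ZMod p × ℕ :=
  (a.1 + 1, a.2)

lemma shiftVertex_iterate (n : ℕ) (a : ZMod p × ℕ) : shiftVertex^[n] a = (a.1 + n, a.2) := by
  induction n with
  | zero => simp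
  | succ n ih => rw [Function.iterate_succ_apply', ih, shiftVertex, Nat.cast_succ, add_assoc]

/-- Lists of length `n` whose entries span a simplex of the `M`-fold join of copies of `ZMod p`:
each copy contains at most one vertex, which may be repeated. -/
def joinSimplices (p M n : ℕ) : Set (List (ZMod p × ℕ)) :=
  {s | s.length = n ∧ (∀ a ∈ s, a.2 < M) ∧ ∀ a ∈ s, ∀ b ∈ s, a.2 = b.2 → a = b}

lemma map_shiftVertex_iterate_mem_joinSimplices {n : ℕ} {s : List (ZMod p × ℕ)}
    (hs : s ∈ joinSimplices p M n) (i : ℕ) : s.map shiftVertex^[i] ∈ joinSimplices p M n := by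
  obtain ⟨hlen, hlev, hinj⟩ := hs
  refine ⟨by simp [hlen], ?_, ?_⟩
  · simpa only [List.forall_mem_map, shiftVertex_iterate] using hlev
  · simp only [List.mem_map, forall_exists_index, and_imp, forall_apply_eq_imp_iff₂,
      shiftVertex_iterate]
    intro a ha b hb hab
    rw [hinj a ha b hb hab]

lemma wedge_eq_zero_of_mem_joinSimplices {n : ℕ} (hn : M < n) {s : List (ZMod p × ℕ)}
    (hs : s ∈ joinSimplices p M n) : wedge F s = 0 := by
  obtain ⟨rfl, hlev, hinj⟩ := hs
  refine wedge_eq_zero_of_not_nodup fun hnodup ↦ hn.not_ge ?_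
  have hsub : s.map Prod.snd ⊆ List.range M := fun l hl ↦ by
    obtain ⟨a, ha, rfl⟩ := List.mem_map.1 hl
    exact List.mem_range.2 (hlev a ha)
  simpa using (List.subperm_of_subset (hnodup.map_on hinj) hsub).length_le

/-- The oriented `(n - 1)`-chains of the `M`-fold join of copies of `ZMod p`. -/
noncomputable def joinChains (F : Type*) [CommRing F] (p M n : ℕ) :
    Submodule F (ExteriorAlgebra F (ZMod p × ℕ →₀ F)) :=
  Submodule.span F (wedge F '' joinSimplices p M n)

lemma wedge_mem_joinChains {n : ℕ} {s : List (ZMod p × ℕ)} (hs : s ∈ joinSimplices p M n) :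
    wedge F s ∈ joinChains F p M n :=
  Submodule.subset_span (Set.mem_image_of_mem _ hs)

lemma apply_mem_of_mem_joinChains {n : ℕ} {V : Type*} [AddCommGroup V] [Module F V]
    (T : ExteriorAlgebra F (ZMod p × ℕ →₀ F) →ₗ[F] V) {W : Submodule F V}
    (h : ∀ s ∈ joinSimplices p M n, T (wedge F s) ∈ W) {x : ExteriorAlgebra F (ZMod p × ℕ →₀ F)}
    (hx : x ∈ joinChains F p M n) : T x ∈ W :=
  Submodule.span_le (p := W.comap T).2 (Set.forall_mem_image.2 h) hx

lemma eq_zero_of_mem_joinChains {n : ℕ} (hn : M < n) {x : ExteriorAlgebra F (ZMod p × ℕ →₀ F)}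
    (hx : x ∈ joinChains F p M n) : x = 0 :=
  LinearMap.eqOn_span' (f := LinearMap.id) (g := (0 : Module.End F _)) (Set.forall_mem_image.2
    fun _ ↦ wedge_eq_zero_of_mem_joinSimplices hn) hx

lemma relabel_eq_self_of_mem_joinChains_zero (f : ZMod p × ℕ → ZMod p × ℕ)
    {x : ExteriorAlgebra F (ZMod p × ℕ →₀ F)} (hx : x ∈ joinChains F p M 0) : relabel f x = x := by
  refine LinearMap.eqOn_span' (g := LinearMap.id) (Set.forall_mem_image.2 fun s hs ↦ ?_) hx
  rw [List.length_eq_zero_iff.1 hs.1, relabel_wedge]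
  rfl

lemma relabel_shiftVertex_mem_joinChains {n : ℕ} {x : ExteriorAlgebra F (ZMod p × ℕ →₀ F)}
    (hx : x ∈ joinChains F p M n) : relabel shiftVertex x ∈ joinChains F p M n :=
  apply_mem_of_mem_joinChains _ (fun s hs ↦ by
    rw [relabel_wedge]
    exact wedge_mem_joinChains (map_shiftVertex_iterate_mem_joinSimplices hs 1)) hx

lemma orientedBoundary_mem_joinChains {n : ℕ} {x : ExteriorAlgebra F (ZMod p × ℕ →₀ F)}
    (hx : x ∈ joinChains F p M (n + 1)) : orientedBoundary x ∈ joinChains F p M n := by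
  refine apply_mem_of_mem_joinChains _ (fun s hs ↦ ?_) hx
  obtain ⟨hlen, hlev, hinj⟩ := hs
  rw [← orient_of, orientedBoundary_orient]
  refine ListChain.apply_mem_of_mem_supported _ (fun s' hs' ↦ ?_)
    (ListChain.boundary_of_mem_supported s)
  obtain ⟨hlen', hsub⟩ := hs'
  rw [orient_of]
  exact wedge_mem_joinChains ⟨by lia, fun a ha ↦ hlev a (hsub ha),
    fun a ha b hb ↦ hinj a (hsub ha) b (hsub hb)⟩

/-- The projection of the chains of the `M`-fold join to a fundamental domain of the cyclic action:
it keeps the simplices whose vertex in the first copy that they meet is `0`. -/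
noncomputable def fundamentalProj (F : Type*) [CommRing F] (p M : ℕ) :
    Module.End F (ExteriorAlgebra F (ZMod p × ℕ →₀ F)) :=
  ∑ l ∈ Finset.range M, (restrictTo (fun a ↦ l < a.2 ∨ a = (0, l)) - restrictTo (fun a ↦ l < a.2))

lemma fundamentalProj_wedge {n : ℕ} {s : List (ZMod p × ℕ)} (hs : s ∈ joinSimplices p M n)
    {b : ZMod p × ℕ} (hb : b ∈ s) (hmin : ∀ a ∈ s, b.2 ≤ a.2) :
    fundamentalProj F p M (wedge F s) = if b.1 = 0 then wedge F s else 0 := by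
  obtain ⟨-, hlev, hinj⟩ := hs
  rw [fundamentalProj, LinearMap.sum_apply, Finset.sum_eq_single b.2]
  · rw [LinearMap.sub_apply, restrictTo_wedge_of_mem (Q := fun a ↦ b.2 < a.2) hb (lt_irrefl _),
      sub_zero]
    split_ifs with h
    · refine restrictTo_wedge_of_forall fun a ha ↦ (hmin a ha).lt_or_eq.imp_right fun hab ↦ ?_
      rw [← hinj b hb a ha hab, ← h]
    · exact restrictTo_wedge_of_mem hb (by simpa [Prod.ext_iff] using h)
  · intro l _ hl
    rw [LinearMap.sub_apply, sub_eq_zero]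
    rcases hl.lt_or_gt with hl | hl
    · have hlt (a) (ha : a ∈ s) : l < a.2 := hl.trans_le (hmin a ha)
      rw [restrictTo_wedge_of_forall hlt,
        restrictTo_wedge_of_forall fun a ha ↦ .inl (hlt a ha)]
    · rw [restrictTo_wedge_of_mem (Q := fun a ↦ l < a.2) hb hl.not_gt, restrictTo_wedge_of_mem hb]
      rintro (h | rfl)
      exacts [hl.not_gt h, hl.false]
  · exact fun h ↦ (h (Finset.mem_range.2 (hlev b hb))).elim

lemma exists_forall_fundamentalProj_wedge {n : ℕ} {s : List (ZMod p × ℕ)}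
    (hs : s ∈ joinSimplices p M (n + 1)) :
    ∃ k : ZMod p, ∀ i, fundamentalProj F p M (wedge F (s.map shiftVertex^[i])) =
      if k + i = 0 then wedge F (s.map shiftVertex^[i]) else 0 := by
  have hne : s.toFinset.Nonempty := by
    rw [List.toFinset_nonempty_iff, ← List.length_pos_iff, hs.1]
    exact n.succ_pos
  obtain ⟨b, hb, hmin⟩ := s.toFinset.exists_min_image Prod.snd hne
  simp only [List.mem_toFinset] at hb hmin
  refine ⟨b.1, fun i ↦ ?_⟩
  rw [fundamentalProj_wedge (map_shiftVertex_iterate_mem_joinSimplices hs i)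
    (List.mem_map_of_mem hb) (by simpa only [List.forall_mem_map, shiftVertex_iterate] using hmin),
    shiftVertex_iterate]

lemma fundamentalProj_mem_joinChains {n : ℕ} {x : ExteriorAlgebra F (ZMod p × ℕ →₀ F)}
    (hx : x ∈ joinChains F p M (n + 1)) :
    fundamentalProj F p M x ∈ joinChains F p M (n + 1) := by
  refine apply_mem_of_mem_joinChains _ (fun s hs ↦ ?_) hx
  obtain ⟨k, hk⟩ := exists_forall_fundamentalProj_wedge (F := F) hs
  have h := hk 0
  rw [Function.iterate_zero, List.map_id] at h
  rw [h]
  split_ifs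
  exacts [wedge_mem_joinChains hs, zero_mem _]

lemma relabel_shiftVertex_pow_wedge (s : List (ZMod p × ℕ)) :
    (relabel shiftVertex ^ p) (wedge F s) = wedge F s := by
  have hid : shiftVertex^[p] = (id : ZMod p × ℕ → _) := by
    ext a <;> simp [shiftVertex_iterate]
  rw [relabel_pow_wedge, hid, List.map_id]

lemma sum_fundamentalProj [NeZero p] {n : ℕ} {x : ExteriorAlgebra F (ZMod p × ℕ →₀ F)}
    (hx : x ∈ joinChains F p M (n + 1)) :
    ∑ i ∈ Finset.range p, (relabel shiftVertex ^ i)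
      (fundamentalProj F p M ((relabel shiftVertex ^ (p - i)) x)) = x := by
  let T (i : ℕ) : Module.End F (ExteriorAlgebra F (ZMod p × ℕ →₀ F)) :=
    relabel shiftVertex ^ i * fundamentalProj F p M * relabel shiftVertex ^ (p - i)
  suffices ∀ s ∈ joinSimplices p M (n + 1), (∑ i ∈ Finset.range p, T i) (wedge F s) = wedge F s by
    simpa [T, LinearMap.sum_apply] using LinearMap.eqOn_span' (f := ∑ i ∈ Finset.range p, T i)
      (g := LinearMap.id) (Set.forall_mem_image.2 this) hx
  intro s hs
  obtain ⟨k, hk⟩ := exists_forall_fundamentalProj_wedge (F := F) hs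
  have hterm (i : ℕ) (hi : i ∈ Finset.range p) :
      T i (wedge F s) = if i = k.val then wedge F s else 0 := by
    have hip := Finset.mem_range.1 hi
    have hiff : k + (p - i : ℕ) = 0 ↔ i = k.val := by
      rw [Nat.cast_sub hip.le, ZMod.natCast_self, zero_sub, ← sub_eq_add_neg, sub_eq_zero]
      exact ⟨fun h ↦ by rw [h, ZMod.val_cast_of_lt hip],
        fun h ↦ by rw [h, ZMod.natCast_rightInverse]⟩
    simp only [T]
    rw [Module.End.mul_apply, Module.End.mul_apply, relabel_pow_wedge, hk,
      apply_ite (relabel shiftVertex ^ i), map_zero, ← relabel_pow_wedge, ← Module.End.mul_apply,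
      ← pow_add, Nat.add_sub_cancel' hip.le, relabel_shiftVertex_pow_wedge]
    simp only [hiff]
  rw [LinearMap.sum_apply, Finset.sum_congr rfl hterm, Finset.sum_ite_eq',
    if_pos (Finset.mem_range.2 k.val_lt)]

lemma exists_periodicDiff_succ_eq_of_mem_joinChains [NeZero p] (n k : ℕ)
    {x : ExteriorAlgebra F (ZMod p × ℕ →₀ F)} (hxS : x ∈ joinChains F p M (k + 1))
    (hx : periodicDiff p (relabel shiftVertex) n x = 0) :
    ∃ y ∈ joinChains F p M (k + 1), periodicDiff p (relabel shiftVertex) (n + 1) y = x := by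
  refine exists_periodicDiff_succ_eq_of_mem (fun _ ↦ relabel_shiftVertex_mem_joinChains)
    (fun y hy ↦ ?_) (fun _ ↦ fundamentalProj_mem_joinChains) (fun _ ↦ sum_fundamentalProj) n hxS hx
  exact LinearMap.eqOn_span' (g := LinearMap.id) (Set.forall_mem_image.2 fun s _ ↦
    relabel_shiftVertex_pow_wedge s) hy

end JoinComplex

section Labelling

variable {E : Type*} [PseudoMetricSpace E] {p m : ℕ} {g : E → E} {U V : Set E}

/-- An equivariant map, locally constant at a uniform scale, from the `g`-invariant set `U` to the
`m`-fold join of copies of `ZMod p`: the point `x` is sent to the vertex `κ x` of the copy `lev x`.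
This is a bound of Krasnoselskii genus type on the `ℤ/p`-space `U`. -/
def HasLabelling (p : ℕ) (g : E → E) (U : Set E) (m : ℕ) : Prop :=
  (∀ x, g x ∈ U ↔ x ∈ U) ∧ ∃ (κ : E → ZMod p) (lev : E → ℕ) (δ : ℝ), 0 < δ ∧
    (∀ x ∈ U, κ (g x) = κ x + 1 ∧ lev (g x) = lev x ∧ lev x < m) ∧
    ∀ x ∈ U, ∀ y ∈ U, dist x y < δ → lev x = lev y → κ x = κ y

namespace HasLabelling

lemma mono_right {m' : ℕ} (h : HasLabelling p g U m) (hm : m ≤ m') : HasLabelling p g U m' := by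
  obtain ⟨hU, κ, lev, δ, hδ, hlab, hloc⟩ := h
  exact ⟨hU, κ, lev, δ, hδ, fun x hx ↦ (hlab x hx).imp_right (.imp_right (lt_of_lt_of_le · hm)),
    hloc⟩

lemma mono_left (h : HasLabelling p g U m) (hVU : V ⊆ U) (hV : ∀ x, g x ∈ V ↔ x ∈ V) :
    HasLabelling p g V m := by
  obtain ⟨-, κ, lev, δ, hδ, hlab, hloc⟩ := h
  exact ⟨hV, κ, lev, δ, hδ, fun x hx ↦ hlab x (hVU hx),
    fun x hx y hy ↦ hloc x (hVU hx) y (hVU hy)⟩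

lemma empty (p : ℕ) (g : E → E) : HasLabelling p g ∅ 0 :=
  ⟨by simp, 0, 0, 1, one_pos, by simp, by simp⟩

lemma union {a b : ℕ} (hU : HasLabelling p g U a) (hV : HasLabelling p g V b) :
    HasLabelling p g (U ∪ V) (a + b) := by
  classical
  obtain ⟨hU, κ, lev, δ, hδ, hlab, hloc⟩ := hU
  obtain ⟨hV, κ', lev', δ', hδ', hlab', hloc'⟩ := hV
  refine ⟨fun x ↦ by simp [hU, hV], fun x ↦ if x ∈ U then κ x else κ' x,
    fun x ↦ if x ∈ U then lev x else a + lev' x, min δ δ', lt_min hδ hδ', ?_, ?_⟩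
  · intro x hx
    by_cases hxU : x ∈ U
    · simp only [hU, hxU, if_true]
      exact (hlab x hxU).imp_right (.imp_right (Nat.lt_add_right b))
    · simp only [hU, hxU, if_false]
      exact (hlab' x (hx.resolve_left hxU)).imp_right
        (.imp (congrArg (a + ·)) (Nat.add_lt_add_left · a))
  · intro x hx y hy hxy h
    rw [lt_min_iff] at hxy
    by_cases hxU : x ∈ U <;> by_cases hyU : y ∈ U <;> simp only [hxU, hyU, if_true, if_false] at h ⊢
    · exact hloc x hxU y hyU hxy.1 h
    · have := (hlab x hxU).2.2
      lia
    · have := (hlab y hyU).2.2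
      lia
    · exact hloc' x (hx.resolve_left hxU) y (hy.resolve_left hyU) hxy.2 (Nat.add_left_cancel h)

lemma biUnion {ι : Type*} {W : ι → Set E} (s : Finset ι) (h : ∀ i ∈ s, HasLabelling p g (W i) m) :
    HasLabelling p g (⋃ i ∈ s, W i) (s.card * m) := by
  induction s using Finset.cons_induction with
  | empty => simpa using empty p g
  | cons i s hi ih =>
    rw [Finset.card_cons, add_mul, one_mul, add_comm]
    simpa using (h i (Finset.mem_cons_self i s)).union
      (ih fun j hj ↦ h j (Finset.mem_cons_of_mem hj))

lemma exists_chainMap (F : Type*) [CommRing F] (h : HasLabelling p g U m) :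
    ∃ T : ListChain F E →ₗ[F] ExteriorAlgebra F (ZMod p × ℕ →₀ F),
      (∃ δ > 0, ∀ n, ∀ l ∈ smallLists U n δ, T (ListChain.of l) ∈ joinChains F p m n) ∧
      (∀ c ∈ Finsupp.supported F F {l | ∀ x ∈ l, x ∈ U},
        T (ListChain.map g c) = relabel shiftVertex (T c)) ∧
      (∀ c, orientedBoundary (T c) = T (ListChain.boundary c)) ∧
      ∀ x, orientedBoundary (T (ListChain.of [x])) = 1 := by
  obtain ⟨-, κ, lev, δ, hδ, hlab, hloc⟩ := h
  let vertex (x : E) : ZMod p × ℕ := (κ x, lev x)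
  have hvertex (x : E) (hx : x ∈ U) : vertex (g x) = shiftVertex (vertex x) :=
    Prod.ext (hlab x hx).1 (hlab x hx).2.1
  refine ⟨orient ∘ₗ ListChain.map vertex, ⟨δ, hδ, ?_⟩, fun c hc ↦ ?_, fun c ↦ ?_, fun x ↦ ?_⟩
  · rintro n l ⟨hlen, hlU, hlδ⟩
    rw [LinearMap.comp_apply, ListChain.map_of, orient_of]
    refine wedge_mem_joinChains ⟨by simp [hlen], ?_, ?_⟩
    · simpa only [List.forall_mem_map] using fun x hx ↦ (hlab x (hlU x hx)).2.2
    · simp only [List.forall_mem_map]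
      exact fun x hx y hy hxy ↦
        Prod.ext (hloc x (hlU x hx) y (hlU y hy) (hlδ x hx y hy) hxy) hxy
  · refine ListChain.apply_eq_of_mem_supported (orient ∘ₗ ListChain.map vertex ∘ₗ ListChain.map g)
      (relabel shiftVertex ∘ₗ orient ∘ₗ ListChain.map vertex) (fun l hl ↦ ?_) hc
    simp only [LinearMap.comp_apply, ListChain.map_of, orient_of, relabel_wedge, List.map_map]
    exact congrArg (wedge F) (List.map_congr_left fun x hx ↦ hvertex x (hl x hx))
  · rw [LinearMap.comp_apply, orientedBoundary_orient, ListChain.boundary_map, LinearMap.comp_apply]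
  · rw [LinearMap.comp_apply, ListChain.map_of, orient_of, List.map_singleton,
      orientedBoundary_wedge_singleton]

end HasLabelling

/-- A cone tower of height `m + 1` models the join of `m + 1` copies of `ZMod p`; that it does not
map to the join of `m` copies is a theorem of Borsuk-Ulam type. -/
theorem IsConeTower.not_hasLabelling {E : Type*} [SeminormedAddCommGroup E] [NormedSpace ℝ E]
    {p m : ℕ} (hp : 1 < p) {g : E → E} (hg : g^[p] = id) (hgi : Isometry g) {A : ℕ → Set E}
    {v : ℕ → E} (hA : IsConeTower g A v) : ¬ HasLabelling p g (A m) m := by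
  intro hlab
  have : Fact (1 < p) := ⟨hp⟩
  have : NeZero p := ⟨(zero_lt_one.trans hp).ne'⟩
  obtain ⟨T, ⟨δ, hδ, hT⟩, hTg, hTb, hTv⟩ := hlab.exists_chainMap (ZMod p)
  obtain ⟨c, hc0, hc, hbc⟩ := hA.exists_resolution (CharP.cast_eq_zero (ZMod p) p) hg hgi hδ
  replace hc {n : ℕ} (hn : n ≤ m) :
      c n ∈ Finsupp.supported (ZMod p) (ZMod p) (smallLists (A m) (n + 1) δ) :=
    Finsupp.supported_mono (smallLists_mono (hA.monotone hn)) (hc n)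
  have hTc {n : ℕ} (hn : n ≤ m) : T (c n) ∈ joinChains (ZMod p) p m (n + 1) :=
    ListChain.apply_mem_of_mem_supported T (hT _) (hc hn)
  have hgS : ∀ z ∈ Finsupp.supported (ZMod p) (ZMod p) {l : List E | ∀ x ∈ l, x ∈ A m},
      ListChain.map g z ∈ Finsupp.supported (ZMod p) (ZMod p) {l : List E | ∀ x ∈ l, x ∈ A m} :=
    fun z ↦ ListChain.map_mem_supported fun l hl ↦ by
      simpa using fun x hx ↦ hA.mapsTo m (hl x hx)
  have hbTc (n : ℕ) (hn : n < m) : orientedBoundary (T (c (n + 1))) =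
      periodicDiff p (relabel shiftVertex) n (T (c n)) := by
    rw [hTb, hbc, map_periodicDiff_of_mem hgS hTg]
    exact Finsupp.supported_mono (fun l hl ↦ hl.2.1) (hc hn.le)
  obtain ⟨x, y, hy, hxy⟩ := exists_eq_add_periodicDiff_one (d := fun n ↦ T (c n))
    (S := fun n ↦ joinChains (ZMod p) p m (n + 1)) orientedBoundary_orientedBoundary
    (orientedBoundary_relabel shiftVertex) (fun _ _ ↦ orientedBoundary_mem_joinChains)
    (fun n _ ↦ exists_periodicDiff_succ_eq_of_mem_joinChains n n) (fun _ ↦ hTc)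
    (eq_zero_of_mem_joinChains m.lt_succ_self (hTc le_rfl)) hbTc
  have hone : orientedBoundary (T (c 0)) = 1 := by rw [hc0, hTv]
  have hfix : relabel shiftVertex (orientedBoundary y) = orientedBoundary y :=
    relabel_eq_self_of_mem_joinChains_zero _ (orientedBoundary_mem_joinChains hy)
  rw [hxy, map_add, orientedBoundary_orientedBoundary,
    map_periodicDiff (orientedBoundary_relabel shiftVertex)] at hone
  simp [periodicDiff, hfix] at hone

end Labelling

section EquivariantCoordinate

variable {p : ℕ}

lemma forall_of_add_one [NeZero p] {P : ZMod p → Prop} (h : ∀ k, P k → P (k + 1)) {k : ZMod p}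
    (hk : P k) (l : ZMod p) : P l := by
  have hadd (n : ℕ) : P (k + n) := by
    induction n with
    | zero => simpa using hk
    | succ n ih => simpa [add_assoc] using h _ ih
  simpa using hadd (l - k).val

lemma iterate_add_one_eq_id (p : ℕ) : (· + 1 : ZMod p → ZMod p)^[p] = id := by
  simp [add_right_iterate, funext_iff]

lemma period_eq_of_pow_eq_one [hp : Fact p.Prime] {P : Type*} {e : Equiv.Perm P} (he : e ^ p = 1)
    {b : P} (hb : e b ≠ b) : MulAction.period e b = p := by
  refine (hp.out.eq_one_or_self_of_dvd _ ?_).resolve_left fun h ↦ hb ?_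
  · exact MulAction.pow_smul_eq_iff_period_dvd.1 (by simp [he])
  · simpa [h] using MulAction.pow_period_smul e b

lemma exists_coordinate_of_pow_eq_one [Fact p.Prime] {P : Type*} {e : Equiv.Perm P}
    (he : e ^ p = 1) : ∃ s : P → ZMod p, ∀ a, e a ≠ a → s (e a) = s a + 1 := by
  let base (a : P) : P := (Quotient.mk (Equiv.Perm.SameCycle.setoid e) a).out
  have hbase (a : P) : base (e a) = base a :=
    congrArg Quotient.out (Quotient.sound (Equiv.Perm.sameCycle_apply_left.2 (.refl e a)))
  have hrep (a : P) : ∃ i : ℤ, (e ^ i) (base a) = a :=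
    Quotient.mk_out (s := Equiv.Perm.SameCycle.setoid e) a
  choose i hi using hrep
  refine ⟨fun a ↦ i a, fun a ha ↦ ?_⟩
  have hfree : e (base a) ≠ base a := fun h ↦ ha <| by
    rw [← hi a, ← Equiv.Perm.mul_apply, ← zpow_one_add, add_comm, zpow_add_one,
      Equiv.Perm.mul_apply, h]
  have hstep : (e ^ i (e a)) (base a) = (e ^ (1 + i a)) (base a) := by
    rw [← hbase, hi, hbase, zpow_one_add, Equiv.Perm.mul_apply, hi]
  have hfix : e ^ (1 + i a - i (e a)) • base a = base a := by
    rw [Equiv.Perm.smul_def, sub_eq_neg_add, zpow_add, Equiv.Perm.mul_apply, ← hstep,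
      ← Equiv.Perm.mul_apply, ← zpow_add, neg_add_cancel, zpow_zero, Equiv.Perm.one_apply]
  rw [MulAction.zpow_smul_eq_iff_period_dvd, period_eq_of_pow_eq_one he hfree,
    ← ZMod.intCast_eq_intCast_iff_dvd_sub] at hfix
  simpa [add_comm] using hfix

lemma exists_coordinate_of_iterate_eq_id [Fact p.Prime] {P : Type*} {f : P → P} (hf : f^[p] = id) :
    ∃ s : P → ZMod p, ∀ a, f a ≠ a → s (f a) = s a + 1 := by
  have hp : p - 1 + 1 = p := Nat.sub_add_cancel (Fact.out : p.Prime).one_le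
  let e : Equiv.Perm P :=
    { toFun := f
      invFun := f^[p - 1]
      left_inv a := by rw [← Function.iterate_succ_apply, Nat.succ_eq_add_one, hp, hf, id]
      right_inv a := by rw [← Function.iterate_succ_apply' f, Nat.succ_eq_add_one, hp, hf, id] }
  exact exists_coordinate_of_pow_eq_one (e := e) <| Equiv.ext fun a ↦ by
    rw [← Equiv.Perm.iterate_eq_pow]
    exact congrFun hf a

end EquivariantCoordinate

section StableScale

/-- A fixed point of a monotone `R : ℕ → ℕ` at which `R` is locally constant on the right, if
`1 ≤ R 1` and `R m < m` for some `m`. -/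
noncomputable def stableScale (R : ℕ → ℕ) : ℕ := sInf {q | R (q + 1) ≤ q}

lemma stableScale_spec {R : ℕ → ℕ} (hR : Monotone R) {m : ℕ} (h1 : 1 ≤ R 1) (hm : R m < m) :
    1 ≤ stableScale R ∧ stableScale R + 1 ≤ m ∧ R (stableScale R) = stableScale R ∧
      R (stableScale R + 1) = stableScale R := by
  have hmem : m - 1 ∈ {q | R (q + 1) ≤ q} := by
    simpa [Nat.sub_add_cancel (Nat.one_le_of_lt hm)] using Nat.le_sub_one_of_lt hm
  have hle : stableScale R ≤ m - 1 := Nat.sInf_le hmem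
  have hsucc : R (stableScale R + 1) ≤ stableScale R := Nat.sInf_mem ⟨_, hmem⟩
  have hpos : 1 ≤ stableScale R := h1.trans ((hR (Nat.le_add_left 1 _)).trans hsucc)
  have hself : stableScale R ≤ R (stableScale R) := by
    have : stableScale R - 1 ∉ {q | R (q + 1) ≤ q} :=
      Nat.notMem_of_lt_sInf (Nat.sub_one_lt_of_lt hpos)
    simp only [Set.mem_ofPred_eq, Nat.sub_add_cancel hpos] at this
    lia
  have := hR (Nat.le_add_right (stableScale R) 1)
  lia

end StableScale

section Rotation

variable {p : ℕ} {α : Type*}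

/-- The generator of the rotation action of `ZMod p` on configurations of `p` points. -/
def rotate (x : ZMod p → α) : ZMod p → α := fun k ↦ x (k + 1)

@[simp] lemma rotate_apply (x : ZMod p → α) (k : ZMod p) : rotate x k = x (k + 1) := rfl

lemma rotate_iterate_eq_id : (rotate : (ZMod p → α) → ZMod p → α)^[p] = id := by
  have h (n : ℕ) (x : ZMod p → α) : rotate^[n] x = x ∘ (· + 1)^[n] := by
    induction n with
    | zero => rfl
    | succ n ih =>
      rw [Function.iterate_succ_apply', ih, Function.iterate_succ, ← Function.comp_assoc]
      rfl
  funext x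
  rw [h, iterate_add_one_eq_id, Function.comp_id, id]

lemma isometry_rotate [NeZero p] [PseudoEMetricSpace α] :
    Isometry (rotate : (ZMod p → α) → ZMod p → α) :=
  (IsometryEquiv.piCongrLeft' (Y := fun _ : ZMod p ↦ α) (Equiv.addRight (1 : ZMod p)).symm).isometry

end Rotation

namespace HasLabelling

variable {E : Type*} [PseudoMetricSpace E] {p : ℕ} [Fact p.Prime] {g : E → E} {X : Set E}

/-- At a stable scale the pattern of `x` is the pattern one scale up, hence is squeezed between the
patterns of every nearby point with the same stable scale. -/
theorem of_pattern (hX : ∀ x, g x ∈ X ↔ x ∈ X) {P : Type*} [PartialOrder P] {rank : P → ℕ}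
    (hrank : StrictMono rank) {shift : P → P} (hshift : shift^[p] = id)
    (hrank_shift : ∀ a, rank (shift a) = rank a) {m : ℕ}
    (hfree : ∀ a, 1 ≤ rank a → rank a < m → shift a ≠ a) {pat : ℕ → E → P}
    (hpat : ∀ q x, pat q (g x) = shift (pat q x)) (hmono : ∀ x, Monotone (pat · x)) {δ : ℝ}
    (hδ : 0 < δ) (hclose : ∀ x ∈ X, ∀ y ∈ X, dist x y < δ → ∀ q, pat q x ≤ pat (q + 1) y) :
    HasLabelling p g {x ∈ X | 1 ≤ rank (pat 1 x) ∧ rank (pat m x) < m} (m - 1) := by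
  obtain ⟨s, hs⟩ := exists_coordinate_of_iterate_eq_id hshift
  let scale (x : E) : ℕ := stableScale fun q ↦ rank (pat q x)
  have hscale_g (x : E) : scale (g x) = scale x := by simp only [scale, hpat, hrank_shift]
  have hscale (x : E) (h1 : 1 ≤ rank (pat 1 x)) (hm : rank (pat m x) < m) :
      1 ≤ scale x ∧ scale x + 1 ≤ m ∧ rank (pat (scale x) x) = scale x ∧
        rank (pat (scale x + 1) x) = scale x :=
    stableScale_spec (hrank.monotone.comp (hmono x)) h1 hm
  have hstable (x : E) (h1 : 1 ≤ rank (pat 1 x)) (hm : rank (pat m x) < m) :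
      pat (scale x) x = pat (scale x + 1) x := by
    obtain ⟨-, -, hq, hq'⟩ := hscale x h1 hm
    exact eq_of_le_of_not_lt (hmono x (Nat.le_succ _)) fun hlt ↦ (hrank hlt).ne (hq.trans hq'.symm)
  refine ⟨fun x ↦ ?_, fun x ↦ s (pat (scale x) x), fun x ↦ scale x - 1, δ, hδ, ?_, ?_⟩
  · simp only [Set.mem_ofPred_eq, hX, hpat, hrank_shift]
  · rintro x ⟨-, h1, hm⟩
    obtain ⟨hpos, hlt, hq, -⟩ := hscale x h1 hm
    refine ⟨?_, congrArg (· - 1) (hscale_g x), by lia⟩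
    beta_reduce
    rw [hscale_g, hpat, hs _ (hfree _ (hpos.trans_eq hq.symm) (hq.trans_lt hlt))]
  · rintro x ⟨hx, h1, hm⟩ y ⟨hy, h1', hm'⟩ hxy hlev
    have hxy_scale : scale x = scale y := by
      have := (hscale x h1 hm).1
      have := (hscale y h1' hm').1
      lia
    refine congrArg s (le_antisymm ?_ ?_)
    · rw [hstable y h1' hm', hxy_scale]
      exact hclose x hx y hy hxy _
    · rw [hstable x h1 hm, ← hxy_scale]
      exact hclose y hy x hx (by rwa [dist_comm]) _

end HasLabelling

section NearMax

variable {ι : Type*} {y y' : ι → ℝ} {ε : ℝ}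

/-- The indices at which the family `y` comes within `ε` of its maximum. -/
def nearMax (y : ι → ℝ) (ε : ℝ) : Set ι := {k | ∀ l, y l < y k + ε}

lemma monotone_nearMax (y : ι → ℝ) : Monotone (nearMax y) :=
  fun _ _ hε _ hk l ↦ (hk l).trans_le (by gcongr)

lemma nearMax_nonempty [Finite ι] [Nonempty ι] (hε : 0 < ε) : (nearMax y ε).Nonempty := by
  obtain ⟨k, hk⟩ := Finite.exists_max y
  exact ⟨k, fun l ↦ (hk l).trans_lt (lt_add_of_pos_right _ hε)⟩

lemma nearMax_ne_univ_iff : nearMax y ε ≠ Set.univ ↔ ∃ k l, y k + ε ≤ y l := by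
  simp [nearMax, Set.eq_univ_iff_forall]

lemma nearMax_subset_of_dist_lt [Fintype ι] {η : ℝ} (h : dist y y' < η / 2) :
    nearMax y ε ⊆ nearMax y' (ε + η) := by
  intro k hk l
  have hdist (j : ι) : |y j - y' j| < η / 2 := by
    rw [← Real.dist_eq]
    exact (dist_le_pi_dist y y' j).trans_lt h
  linarith [hk l, (abs_lt.1 (hdist k)).2, (abs_lt.1 (hdist l)).1]

lemma nearMax_rotate {p : ℕ} (y : ZMod p → ℝ) (ε : ℝ) :
    nearMax (rotate y) ε = (· + 1) ⁻¹' nearMax y ε :=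
  Set.ext fun k ↦ (Equiv.addRight (1 : ZMod p)).forall_congr_left (p := fun l ↦ y (l + 1) < _)
    |>.trans (by simp [nearMax])

end NearMax

lemma eq_empty_or_univ_of_preimage_add_one {p : ℕ} [NeZero p] {A : Set (ZMod p)}
    (hA : (· + 1) ⁻¹' A = A) : A = ∅ ∨ A = Set.univ := by
  refine A.eq_empty_or_nonempty.imp_right fun ⟨k, hk⟩ ↦ Set.eq_univ_of_forall ?_
  exact forall_of_add_one (P := (· ∈ A)) (fun k hk ↦ by rwa [← hA] at hk) hk

theorem HasLabelling.of_values {E : Type*} [PseudoMetricSpace E] {p : ℕ} [Fact p.Prime]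
    {g : E → E} {X : Set E} (hX : ∀ x, g x ∈ X ↔ x ∈ X) {F : E → ZMod p → ℝ}
    (hF : ∀ x, F (g x) = rotate (F x)) (hFX : UniformContinuousOn F X) {η : ℝ} (hη : 0 < η) :
    HasLabelling p g {x ∈ X | ∃ k l, F x k + p * η ≤ F x l} (p - 1) := by
  obtain ⟨δ, hδ, hclose⟩ := Metric.uniformContinuousOn_iff.1 hFX (η / 2) (half_pos hη)
  have hshift : (Set.preimage (· + 1 : ZMod p → ZMod p))^[p] = id := by
    rw [← Set.preimage_iterate_eq, iterate_add_one_eq_id, Set.preimage_id_eq]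
  have hfree (A : Set (ZMod p)) (h1 : 1 ≤ A.ncard) (hp : A.ncard < p) : (· + 1) ⁻¹' A ≠ A := by
    intro h
    obtain hA | hA := eq_empty_or_univ_of_preimage_add_one h
    · simp [hA] at h1
    · simp [hA, Set.ncard_univ] at hp
  have key := of_pattern (pat := fun q x ↦ nearMax (F x) (q * η)) hX Set.ncard_strictMono hshift
    (fun A ↦ Set.ncard_preimage_of_injective_subset_range (add_left_injective 1)
      fun k _ ↦ ⟨k - 1, sub_add_cancel k 1⟩) hfree
    (fun q x ↦ by rw [hF, nearMax_rotate])
    (fun x q q' hq ↦ monotone_nearMax (F x) (by gcongr)) hδ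
    (fun x hx y hy hxy q ↦ by
      push_cast
      rw [add_one_mul]
      exact nearMax_subset_of_dist_lt (hclose x hx y hy hxy))
  convert key using 1
  ext x
  have hpos : 1 ≤ (nearMax (F x) ((1 : ℕ) * η)).ncard :=
    (Set.ncard_pos).2 (nearMax_nonempty (by simpa using hη))
  have hlt : (nearMax (F x) (p * η)).ncard < p ↔ ∃ k l, F x k + p * η ≤ F x l := by
    rw [← nearMax_ne_univ_iff]
    exact ⟨fun h hA ↦ by simp [hA, Set.ncard_univ] at h,
      fun h ↦ (Set.ncard_lt_card h).trans_eq (Nat.card_zmod p)⟩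
  simp only [Set.mem_ofPred_eq, hpos, hlt, true_and]

section Corank

variable {ι κ : Type*}

/-- The rank function of the lattice of partitions of a finite type. -/
noncomputable def corank (s : Setoid ι) : ℕ := Nat.card ι - Nat.card (Quotient s)

lemma card_quotient_le [Finite ι] (s : Setoid ι) : Nat.card (Quotient s) ≤ Nat.card ι :=
  Nat.card_le_card_of_surjective _ Quotient.mk_surjective

lemma card_quotient_lt_card_quotient [Finite ι] {s s' : Setoid ι} (h : s < s') :
    Nat.card (Quotient s') < Nat.card (Quotient s) := by
  have hsurj : Function.Surjective (Setoid.map_of_le h.le) := Quotient.ind fun a ↦ ⟨⟦a⟧, rfl⟩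
  refine lt_of_le_of_ne (Nat.card_le_card_of_surjective _ hsurj) fun he ↦ h.not_ge fun a b hab ↦ ?_
  have hinj := ((Nat.bijective_iff_surjective_and_card _).2 ⟨hsurj, he.symm⟩).1
  exact Quotient.exact (hinj (a₁ := ⟦a⟧) (a₂ := ⟦b⟧) (Quotient.sound hab))

lemma corank_strictMono [Finite ι] : StrictMono (corank : Setoid ι → ℕ) := fun s s' h ↦ by
  have := card_quotient_lt_card_quotient h
  have := card_quotient_le s
  have := card_quotient_le s'
  unfold corank
  lia

lemma corank_comap (e : κ ≃ ι) (s : Setoid ι) : corank (s.comap e) = corank s := by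
  unfold corank
  rw [Nat.card_congr e, Nat.card_congr (Quotient.congr e fun a b ↦ Setoid.comap_rel e s a b)]

lemma corank_bot : corank (⊥ : Setoid ι) = 0 := by
  rw [corank, Nat.card_congr Setoid.quotientBotEquiv, Nat.sub_self]

lemma corank_top [Nonempty ι] : corank (⊤ : Setoid ι) = Nat.card ι - 1 := by
  have : Subsingleton (Quotient (⊤ : Setoid ι)) :=
    ⟨Quotient.ind₂ fun _ _ ↦ Quotient.sound trivial⟩
  rw [corank, Nat.card_of_subsingleton (⟦Classical.arbitrary ι⟧ : Quotient (⊤ : Setoid ι))]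

lemma one_le_corank_iff [Finite ι] {s : Setoid ι} : 1 ≤ corank s ↔ s ≠ ⊥ :=
  ⟨by rintro h rfl; simp [corank_bot] at h,
    fun h ↦ (corank_bot (ι := ι)).symm.trans_lt (corank_strictMono (bot_lt_iff_ne_bot.2 h))⟩

lemma corank_lt_iff [Finite ι] [Nonempty ι] {s : Setoid ι} :
    corank s < Nat.card ι - 1 ↔ s ≠ ⊤ :=
  ⟨by rintro h rfl; simp [corank_top] at h,
    fun h ↦ (corank_strictMono (lt_top_iff_ne_top.2 h)).trans_eq corank_top⟩

end Corank

section Proximity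

variable {ι κ α : Type*} [PseudoMetricSpace α] {x y : ι → α} {ε η : ℝ}

/-- The partition of the indices generated by the pairs of points at distance less than `ε`. -/
def proximity (x : ι → α) (ε : ℝ) : Setoid ι :=
  Relation.EqvGen.setoid fun j k ↦ dist (x j) (x k) < ε

lemma proximity_le_iff {s : Setoid ι} :
    proximity x ε ≤ s ↔ ∀ j k, dist (x j) (x k) < ε → s j k :=
  ⟨fun h _ _ hjk ↦ h (Relation.EqvGen.rel _ _ hjk), fun h ↦ Setoid.eqvGen_le h⟩

lemma proximity_of_dist_lt {j k : ι} (h : dist (x j) (x k) < ε) : proximity x ε j k :=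
  Relation.EqvGen.rel _ _ h

lemma monotone_proximity (x : ι → α) : Monotone (proximity x) :=
  fun _ _ hε ↦ proximity_le_iff.2 fun _ _ h ↦ proximity_of_dist_lt (h.trans_le hε)

lemma proximity_ne_bot_iff : proximity x ε ≠ ⊥ ↔ ∃ j k, j ≠ k ∧ dist (x j) (x k) < ε := by
  rw [Ne, ← le_bot_iff, proximity_le_iff]
  simp only [Setoid.bot_def]
  push Not
  exact exists₂_congr fun j k ↦ and_comm

lemma proximity_le_of_dist_lt [Fintype ι] (h : dist x y < η / 2) :
    proximity x ε ≤ proximity y (ε + η) :=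
  proximity_le_iff.2 fun j k hjk ↦ proximity_of_dist_lt <| calc
    dist (y j) (y k) ≤ dist (x j) (y j) + dist (x j) (x k) + dist (x k) (y k) := by
      rw [dist_comm (x j) (y j)]
      exact dist_triangle4 ..
    _ < ε + η := by linarith [dist_le_pi_dist x y j, dist_le_pi_dist x y k]

lemma proximity_comp_equiv (x : ι → α) (e : κ ≃ ι) (ε : ℝ) :
    proximity (x ∘ e) ε = (proximity x ε).comap e := by
  refine le_antisymm (proximity_le_iff.2 fun _ _ h ↦ proximity_of_dist_lt h) ?_
  have h : proximity x ε ≤ (proximity (x ∘ e) ε).comap e.symm :=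
    proximity_le_iff.2 fun j k hjk ↦ proximity_of_dist_lt (by simpa using hjk)
  intro j k hjk
  simpa [Setoid.comap_rel] using h hjk

end Proximity

section ShiftSetoid

variable {p : ℕ}

lemma iterate_setoid_comap {ι : Type*} (f : ι → ι) (n : ℕ) :
    (Setoid.comap f)^[n] = Setoid.comap f^[n] := by
  induction n with
  | zero => rfl
  | succ n ih => rw [Function.iterate_succ', ih]; rfl

lemma eq_bot_or_top_of_comap_add_one [Fact p.Prime] {s : Setoid (ZMod p)}
    (hs : s.comap (· + 1) = s) : s = ⊥ ∨ s = ⊤ := by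
  refine or_iff_not_imp_left.2 fun hbot ↦ ?_
  obtain ⟨j, k, hjk, hne⟩ : ∃ j k, s j k ∧ j ≠ k := by
    by_contra! h
    exact hbot (le_bot_iff.1 fun j k hjk ↦ h j k hjk)
  have htranslate (c : ZMod p) : s (j + c) (k + c) :=
    forall_of_add_one (P := fun c ↦ s (j + c) (k + c)) (k := 0)
      (fun c hc ↦ by rw [← hs] at hc; simpa [Setoid.comap_rel, add_assoc] using hc)
      (by simpa using hjk) c
  have hprogression (c : ZMod p) : s j (j + c * (k - j)) := by
    refine forall_of_add_one (P := fun c ↦ s j (j + c * (k - j))) (k := 0) (fun c hc ↦ ?_)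
      (by simp) c
    convert s.trans' hc (htranslate (c * (k - j))) using 1
    ring
  have hall (a : ZMod p) : s j a := by
    simpa [sub_ne_zero.2 hne.symm] using hprogression ((a - j) / (k - j))
  exact top_le_iff.1 fun a b _ ↦ s.trans' (s.symm' (hall a)) (hall b)

end ShiftSetoid

theorem HasLabelling.of_proximity {p : ℕ} [Fact p.Prime] {α : Type*} [PseudoMetricSpace α]
    {X : Set (ZMod p → α)} (hX : ∀ x, rotate x ∈ X ↔ x ∈ X) {η : ℝ} (hη : 0 < η) :
    HasLabelling p rotate
      {x ∈ X | (∃ j k, j ≠ k ∧ dist (x j) (x k) < η) ∧ proximity x ((p - 1 : ℕ) * η) ≠ ⊤}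
      (p - 2) := by
  have htop {s : Setoid (ZMod p)} : corank s < p - 1 ↔ s ≠ ⊤ := by
    simpa using corank_lt_iff (s := s)
  have hshift : (Setoid.comap (· + 1 : ZMod p → ZMod p))^[p] = id := by
    rw [iterate_setoid_comap, iterate_add_one_eq_id]
    rfl
  have hfree (s : Setoid (ZMod p)) (h1 : 1 ≤ corank s) (hp : corank s < p - 1) :
      s.comap (· + 1) ≠ s := fun h ↦
    (eq_bot_or_top_of_comap_add_one h).elim (one_le_corank_iff.1 h1) (htop.1 hp)
  have key := of_pattern (pat := fun q x ↦ proximity x (q * η)) hX corank_strictMono hshift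
    (fun s ↦ corank_comap (Equiv.addRight 1) s) hfree
    (fun q x ↦ proximity_comp_equiv x (Equiv.addRight 1) (q * η))
    (fun x q q' hq ↦ monotone_proximity x (by gcongr)) (half_pos hη)
    (fun x _ y _ hxy q ↦ by
      push_cast
      rw [add_one_mul]
      exact proximity_le_of_dist_lt hxy)
  simpa only [one_le_corank_iff, htop, proximity_ne_bot_iff, Nat.cast_one, one_mul,
    Nat.sub_sub] using key

section Margins

open Filter Topology

variable {α : Type*}

lemma exists_pos_forall_mem_of_eventually {X : Type*} [TopologicalSpace X] {K : Set X}
    (hK : IsCompact K) {P : ℝ → X → Prop} (h : ∀ x ∈ K, ∀ᶠ z in 𝓝 (0, x), P z.1 z.2) :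
    ∃ ε > 0, ∀ x ∈ K, P ε x := by
  have hev : ∀ᶠ ε in 𝓝[>] 0, ∀ x ∈ K, P ε x :=
    (hK.eventually_forall_of_forall_eventually h).filter_mono nhdsWithin_le_nhds
  obtain ⟨ε, hP, hε⟩ := (hev.and self_mem_nhdsWithin).exists
  exact ⟨ε, hε, hP⟩

lemma exists_pos_forall_proximity_ne_top {ι : Type*} [Finite ι] [MetricSpace α] {K : Set (ι → α)}
    (hK : IsCompact K) (n : ℕ) (hne : ∀ x ∈ K, ∃ a b, x a ≠ x b) :
    ∃ η > 0, ∀ x ∈ K, proximity x (n * η) ≠ ⊤ := by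
  refine exists_pos_forall_mem_of_eventually (P := fun η x ↦ proximity x (n * η) ≠ ⊤) hK
    fun x hx ↦ ?_
  obtain ⟨a, b, hab⟩ := hne x hx
  have hfar : ∀ᶠ z : ℝ × (ι → α) in 𝓝 (0, x), ∀ j k, x j ≠ x k →
      n * z.1 < dist (z.2 j) (z.2 k) := by
    simp only [eventually_all]
    intro j k hjk
    have hl : Continuous fun z : ℝ × (ι → α) ↦ n * z.1 := by fun_prop
    have hr : Continuous fun z : ℝ × (ι → α) ↦ dist (z.2 j) (z.2 k) := by fun_prop
    exact hl.continuousAt.eventually_lt hr.continuousAt (by simpa using hjk)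
  filter_upwards [hfar] with z hz htop
  have hker : proximity z.2 (n * z.1) ≤ Setoid.ker x :=
    proximity_le_iff.2 fun j k hjk ↦ by
      by_contra h
      exact (hz j k h).not_gt hjk
  rw [htop] at hker
  exact hab (hker trivial)

lemma exists_pos_forall_exists_dist_lt_or_add_le {ι J κ : Type*} [PseudoMetricSpace α]
    {K : Set (ι → α)} (hK : IsCompact K) {F : J → (ι → α) → κ → ℝ} (hF : ∀ i, Continuous (F i))
    (h : ∀ x ∈ K, Function.Injective x → ∃ i k l, F i x k < F i x l) (n : ℕ) {η : ℝ} (hη : 0 < η) :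
    ∃ ε > 0, ∀ x ∈ K, (∃ j k, j ≠ k ∧ dist (x j) (x k) < η) ∨
      ∃ i k l, F i x k + n * ε ≤ F i x l := by
  refine exists_pos_forall_mem_of_eventually (P := fun ε x ↦
    (∃ j k, j ≠ k ∧ dist (x j) (x k) < η) ∨ ∃ i k l, F i x k + n * ε ≤ F i x l) hK fun x hx ↦ ?_
  by_cases hinj : Function.Injective x
  · obtain ⟨i, k, l, hkl⟩ := h x hx hinj
    have hl : Continuous fun z : ℝ × (ι → α) ↦ F i z.2 k + n * z.1 := by have := hF i; fun_prop
    have hr : Continuous fun z : ℝ × (ι → α) ↦ F i z.2 l := by have := hF i; fun_prop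
    filter_upwards [hl.continuousAt.eventually_lt hr.continuousAt (by simpa using hkl)] with z hz
    exact Or.inr ⟨i, k, l, hz.le⟩
  · obtain ⟨j, k, hjk, hne⟩ := Function.not_injective_iff.1 hinj
    have hdist : Continuous fun z : ℝ × (ι → α) ↦ dist (z.2 j) (z.2 k) := by fun_prop
    filter_upwards [hdist.continuousAt.eventually_lt continuousAt_const (by simpa [hjk] using hη)]
      with z hz
    exact Or.inl ⟨j, k, hne, hz⟩

end Margins

/-- Either two points of `x` nearly collide, and the partition of the indices by proximity breaks
the rotational symmetry, or some `f i` varies along the rotation orbit of `x`. -/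
theorem hasLabelling_of_forall_injective {p : ℕ} [Fact p.Prime] {α J : Type*} [MetricSpace α]
    [Fintype J] {X : Set (ZMod p → α)} (hX : IsCompact X) (hrot : ∀ x, rotate x ∈ X ↔ x ∈ X)
    (hne : ∀ x ∈ X, ∃ a b, x a ≠ x b) {f : J → (ZMod p → α) → ℝ} (hf : ∀ i, Continuous (f i))
    (h : ∀ x ∈ X, Function.Injective x → ∃ i k, f i (fun j ↦ x (j + k)) ≠ f i x) :
    HasLabelling p rotate X (Fintype.card J * (p - 1) + (p - 2)) := by
  let F (i : J) (x : ZMod p → α) (k : ZMod p) : ℝ := f i fun j ↦ x (j + k)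
  have hF (i : J) : Continuous (F i) := by have := hf i; fun_prop
  have hF_rotate (i : J) (x : ZMod p → α) : F i (rotate x) = rotate (F i x) := by
    funext k
    simp only [F, rotate_apply, add_assoc]
  have hF_lt (x : ZMod p → α) (hx : x ∈ X) (hinj : Function.Injective x) :
      ∃ i k l, F i x k < F i x l := by
    obtain ⟨i, k, hik⟩ := h x hx hinj
    have hik' : F i x k ≠ F i x 0 := by simpa [F] using hik
    exact hik'.lt_or_gt.elim (⟨i, k, 0, ·⟩) (⟨i, 0, k, ·⟩)
  obtain ⟨η, hη, hηX⟩ := exists_pos_forall_proximity_ne_top hX (p - 1) hne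
  obtain ⟨ε, hε, hεX⟩ := exists_pos_forall_exists_dist_lt_or_add_le hX hF hF_lt p hη
  have hspread (i : J) := HasLabelling.of_values hrot (hF_rotate i)
    (hX.uniformContinuousOn_of_continuous (hF i).continuousOn) hε
  refine ((HasLabelling.biUnion Finset.univ fun i _ ↦ hspread i).union
    (HasLabelling.of_proximity hrot hη)).mono_left (fun x hx ↦ ?_) hrot
  obtain hclose | ⟨i, hi⟩ := hεX x hx
  · exact Or.inr ⟨hx, hclose, hηX x hx⟩
  · exact Or.inl (Set.mem_biUnion (Finset.mem_univ i) ⟨hx, hi⟩)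

lemma apply_mem_iff_of_iterate_eq_id {E : Type*} {p : ℕ} [NeZero p] {g : E → E} {S : Set E}
    (hg : g^[p] = id) (hS : Set.MapsTo g S S) (x : E) : g x ∈ S ↔ x ∈ S := by
  refine ⟨fun hx ↦ ?_, fun hx ↦ hS hx⟩
  have := hS.iterate (p - 1) hx
  rwa [← Function.iterate_succ_apply, Nat.succ_eq_add_one, Nat.sub_add_cancel NeZero.one_le, hg,
    id] at this

/-- The points of the standard simplex on `ZMod p × J` with, for each `c`, at most `m c` non-zero
entries in the `c`-th coordinate, viewed as configurations of `p` points of `J → ℝ`. -/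
def sparseSimplex (p : ℕ) [NeZero p] {J : Type*} [Fintype J] (m : J → ℕ) : Set (ZMod p → J → ℝ) :=
  {x | Function.uncurry x ∈ stdSimplex ℝ (ZMod p × J) ∧ ∀ c, {k | x k c ≠ 0}.ncard ≤ m c}

namespace sparseSimplex

/-- The vertex of the standard simplex on `ZMod p × J` at `(0, c)`. -/
def vertex {J : Type*} [DecidableEq J] (p : ℕ) (c : J) : ZMod p → J → ℝ :=
  Function.curry (Pi.single (0, c) 1)

lemma vertex_eq_zero {J : Type*} [DecidableEq J] {p : ℕ} {k : ZMod p} {c c' : J}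
    (h : k ≠ 0 ∨ c' ≠ c) : vertex p c k c' = 0 :=
  Pi.single_eq_of_ne (by simpa [Prod.ext_iff, or_iff_not_imp_left] using h) 1

variable {p : ℕ} [NeZero p] {J : Type*} [Fintype J] {m m' : J → ℕ} {x : ZMod p → J → ℝ}

lemma isCompact : IsCompact (sparseSimplex p m) := by
  have hsimplex : IsCompact {x : ZMod p → J → ℝ | Function.uncurry x ∈ stdSimplex ℝ _} := by
    convert (isCompact_stdSimplex ℝ (ZMod p × J)).image
      (f := Function.curry) (by unfold Function.curry; fun_prop) using 1
    exact ((Equiv.curry (ZMod p) J ℝ).image_eq_preimage_symm _).symm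
  suffices IsClosed {x : ZMod p → J → ℝ | ∀ c, {k | x k c ≠ 0}.ncard ≤ m c} from
    hsimplex.inter_right this
  rw [Set.ofPred_forall]
  refine isClosed_iInter fun c ↦ ?_
  have hunion : {x : ZMod p → J → ℝ | {k | x k c ≠ 0}.ncard ≤ m c} =
      ⋃ T : {T : Set (ZMod p) // T.ncard ≤ m c}, ⋂ k ∈ T.1ᶜ, {x | x k c = 0} := by
    ext x
    simp only [Set.mem_iUnion, Set.mem_iInter, Set.mem_ofPred_eq, Subtype.exists]
    refine ⟨fun h ↦ ⟨_, h, by simp⟩, fun ⟨T, hT, hx⟩ ↦ (Set.ncard_le_ncard fun k hk ↦ ?_).trans hT⟩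
    exact not_imp_comm.1 (hx k) hk
  rw [hunion]
  exact isClosed_iUnion_of_finite fun T ↦ isClosed_biInter fun k _ ↦
    isClosed_eq (by fun_prop) continuous_const

lemma rotate_mem (hx : x ∈ sparseSimplex p m) : rotate x ∈ sparseSimplex p m := by
  obtain ⟨⟨hnonneg, hsum⟩, hcard⟩ := hx
  refine ⟨⟨fun kc ↦ hnonneg (kc.1 + 1, kc.2), ?_⟩, fun c ↦ (Eq.le ?_).trans (hcard c)⟩
  · rw [← hsum]
    exact Equiv.sum_comp ((Equiv.addRight (1 : ZMod p)).prodCongr (.refl J)) (Function.uncurry x)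
  · exact Set.ncard_preimage_of_injective_subset_range (s := {k | x k c ≠ 0})
      (add_left_injective (1 : ZMod p)) fun k _ ↦ ⟨k - 1, sub_add_cancel k 1⟩

lemma exists_ne (hm : ∀ c, m c < p) (hx : x ∈ sparseSimplex p m) : ∃ a b, x a ≠ x b := by
  by_contra! h
  have hzero (k : ZMod p) (c : J) : x k c = 0 := by
    by_contra hne
    have huniv : {k | x k c ≠ 0} = Set.univ :=
      Set.eq_univ_of_forall fun j ↦ by rwa [Set.mem_ofPred_eq, h j k]
    have := hx.2 c
    rw [huniv, Set.ncard_univ, Nat.card_zmod] at this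
    exact this.not_gt (hm c)
  have hsum := hx.1.2
  simp [Function.uncurry, hzero] at hsum

variable [DecidableEq J] {c : J}

lemma vertex_mem (hc : 1 ≤ m c) : vertex p c ∈ sparseSimplex p m := by
  refine ⟨single_mem_stdSimplex ℝ (0, c), fun c' ↦ ?_⟩
  obtain rfl | hne := eq_or_ne c' c
  · refine (Set.ncard_le_ncard (t := {0}) fun k hk ↦ ?_).trans (by simpa using hc)
    exact not_imp_comm.1 (fun h ↦ vertex_eq_zero (.inl h)) hk
  · simp [vertex_eq_zero (.inr hne)]

lemma segment_vertex_subset (hm : m ≤ m') (hc : m c < m' c) (hx : x ∈ sparseSimplex p m) :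
    segment ℝ x (vertex p c) ⊆ sparseSimplex p m' := by
  rintro _ ⟨a, b, ha, hb, hab, rfl⟩
  refine ⟨convex_stdSimplex ℝ _ hx.1 (single_mem_stdSimplex ℝ (0, c)) ha hb hab, fun c' ↦ ?_⟩
  have hzero {k : ZMod p} (hxk : x k c' = 0) (h : k ≠ 0 ∨ c' ≠ c) :
      (a • x + b • vertex p c) k c' = 0 := by
    simp [hxk, vertex_eq_zero h]
  obtain rfl | hne := eq_or_ne c' c
  · have hsub : {k | (a • x + b • vertex p c') k c' ≠ 0} ⊆ insert 0 {k | x k c' ≠ 0} :=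
      fun k hk ↦ or_iff_not_imp_left.2 fun hk0 hxk ↦ hk (hzero hxk (.inl hk0))
    calc _ ≤ (insert 0 {k | x k c' ≠ 0}).ncard := Set.ncard_le_ncard hsub
      _ ≤ {k | x k c' ≠ 0}.ncard + 1 := Set.ncard_insert_le _ _
      _ ≤ m' c' := (hx.2 c').trans_lt hc
  · refine (Set.ncard_le_ncard fun k hk hxk ↦ ?_).trans ((hx.2 c').trans (hm c'))
    exact hk (hzero hxk (.inr hne))

end sparseSimplex

section RoundRobin

variable {d : ℕ} [NeZero d]

/-- The number of the first `n` turns that fall to each of `d` players taking turns cyclically. -/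
def turnCount (d : ℕ) [NeZero d] (n : ℕ) (c : Fin d) : ℕ := n.count (Fin.ofNat d · = c)

lemma turnCount_succ (n : ℕ) (c : Fin d) :
    turnCount d (n + 1) c = turnCount d n c + if Fin.ofNat d n = c then 1 else 0 :=
  Nat.count_succ ..

lemma monotone_turnCount : Monotone (turnCount d) := fun _ _ h _ ↦ Nat.count_monotone _ h

lemma turnCount_lt_turnCount_succ (n : ℕ) :
    turnCount d n (Fin.ofNat d n) < turnCount d (n + 1) (Fin.ofNat d n) := by
  simp [turnCount_succ]

lemma turnCount_mul (n : ℕ) (c : Fin d) : turnCount d (d * n) c = n := by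
  have hmod : (Fin.ofNat d · = c) = (· ≡ c [MOD d]) := by
    ext i
    simp [Fin.ext_iff, Nat.ModEq, Nat.mod_eq_of_lt c.2]
  simp only [turnCount, hmod]
  rw [Nat.count_modEq_card (d * n) (NeZero.pos d) c]
  simp [NeZero.pos d]

lemma isConeTower_sparseSimplex (p : ℕ) [NeZero p] :
    IsConeTower rotate (fun n ↦ sparseSimplex p (turnCount d (n + 1)))
      (fun n ↦ sparseSimplex.vertex p (Fin.ofNat d n)) where
  mapsTo _ _ := sparseSimplex.rotate_mem
  isBounded _ := sparseSimplex.isCompact.isBounded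
  apex_mem n := sparseSimplex.vertex_mem (Nat.one_le_of_lt (turnCount_lt_turnCount_succ n))
  segment_subset n _ := sparseSimplex.segment_vertex_subset (monotone_turnCount (Nat.le_succ _))
    (turnCount_lt_turnCount_succ (n + 1))

end RoundRobin

/-- The sparse simplex at height `d * (p - 1) - 1` is the last one without constant configurations,
and `card J < d` families leave room for only that many levels. -/
theorem exists_injective_forall_rotate_eq {p : ℕ} [Fact p.Prime] {d : ℕ} {J : Type*} [Fintype J]
    (hd : Fintype.card J < d) {f : J → (ZMod p → Fin d → ℝ) → ℝ} (hf : ∀ i, Continuous (f i)) :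
    ∃ x : ZMod p → Fin d → ℝ, Function.Injective x ∧ ∀ i k, f i (fun j ↦ x (j + k)) = f i x := by
  by_contra! hcon
  have hp : 1 < p := (Fact.out : p.Prime).one_lt
  have : NeZero d := ⟨hd.ne_bot⟩
  have hlevels : Fintype.card J * (p - 1) + (p - 2) ≤ d * (p - 1) - 1 := by
    have : (Fintype.card J + 1) * (p - 1) ≤ d * (p - 1) := Nat.mul_le_mul_right _ hd
    rw [Nat.succ_mul] at this
    lia
  have htop : d * (p - 1) - 1 + 1 = d * (p - 1) :=
    Nat.sub_add_cancel (Nat.mul_pos (NeZero.pos d) (Nat.sub_pos_of_lt hp))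
  refine (isConeTower_sparseSimplex (d := d) p).not_hasLabelling hp rotate_iterate_eq_id
    isometry_rotate (.mono_right ?_ hlevels)
  refine hasLabelling_of_forall_injective sparseSimplex.isCompact
    (apply_mem_iff_of_iterate_eq_id rotate_iterate_eq_id fun _ ↦ sparseSimplex.rotate_mem)
    (fun x ↦ sparseSimplex.exists_ne fun c ↦ ?_) hf fun x _ ↦ hcon x
  rw [htop, turnCount_mul]
  exact Nat.sub_one_lt_of_lt hp

lemma IsMetricEquivToStd.continuous {E : Type*} [TopologicalSpace E] {ρ : E → E → ℝ}
    (h : IsMetricEquivToStd ρ) : Continuous fun z : E × E ↦ ρ z.1 z.2 := by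
  obtain ⟨hsymm, hzero, htri, hopen⟩ := h
  have hball (a : E) {ε : ℝ} (hε : 0 < ε) : ∀ᶠ x in nhds a, ρ a x < ε := by
    refine IsOpen.mem_nhds ((hopen {x | ρ a x < ε}).2 fun x hx ↦ ?_) ?_
    · exact ⟨ε - ρ a x, sub_pos.2 hx, fun y hy ↦ (htri a x y).trans_lt (lt_sub_iff_add_lt'.1 hy)⟩
    · exact ((hzero a a).2 rfl).trans_lt hε
  refine continuous_iff_continuousAt.2 fun ⟨a, b⟩ ↦ Metric.tendsto_nhds.2 fun ε hε ↦ ?_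
  filter_upwards [(hball a (half_pos hε)).prod_nhds (hball b (half_pos hε))] with ⟨x, y⟩ ⟨hx, hy⟩
  have hupper : ρ x y ≤ ρ a x + ρ a b + ρ b y := by
    linarith [htri x a y, htri a b y, hsymm x a]
  have hlower : ρ a b ≤ ρ a x + ρ x y + ρ b y := by
    linarith [htri a x b, htri x y b, hsymm y b]
  rw [Real.dist_eq, abs_lt]
  constructor <;> linarith

theorem exists_pgons_equilateral_general {p : ℕ} [Fact p.Prime] {ι E : Type*} [Finite ι]
    [AddCommGroup E] [Module ℝ E] [TopologicalSpace E] [ContinuousAdd E] [ContinuousSMul ℝ E]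
    (hι : (Nat.card ι : Cardinal) < Module.rank ℝ E) {ρ : ι → E → E → ℝ}
    (hρ : ∀ i, Continuous fun z : E × E ↦ ρ i z.1 z.2) (t : ι → ZMod p) :
    ∃ x : ZMod p → E, Function.Injective x ∧
      ∀ i k, ρ i (x (k * t i)) (x ((k + 1) * t i)) = ρ i (x 0) (x (t i)) := by
  have := Fintype.ofFinite ι
  let d := Nat.card ι + 1
  have hrank : (d : Cardinal) ≤ Module.rank ℝ E := by
    rwa [Nat.cast_add_one, Cardinal.natCast_add_one_le_iff]
  obtain ⟨L, hL⟩ := Module.le_rank_iff_exists_linearMap.1 hrank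
  have hLcont : Continuous L := L.continuous_on_pi
  have hf (i : ι) : Continuous fun x : ZMod p → Fin d → ℝ ↦ ρ i (L (x 0)) (L (x (t i))) :=
    (hρ i).comp (f := fun x : ZMod p → Fin d → ℝ ↦ (L (x 0), L (x (t i)))) (by fun_prop)
  obtain ⟨x, hx, hρx⟩ := exists_injective_forall_rotate_eq (d := d) (by simp [d]) hf
  refine ⟨L ∘ x, hL.comp hx, fun i k ↦ ?_⟩
  simpa [add_mul, add_comm] using hρx i (k * t i)

/-- Theorem 2 (main theorem): existence of points whose `p`-gons `C_{tᵢ}` are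
`ρᵢ`-equilateral, for `d > r`. -/
theorem exists_pgons_equilateral
    (p d r : ℕ) (hp : p.Prime) (hodd : Odd p) (hd : 0 < d) (hr : 0 < r) (hdr : d > r)
    (ρ : Fin r → EuclideanSpace ℝ (Fin d) → EuclideanSpace ℝ (Fin d) → ℝ)
    (hρ : ∀ i, IsMetricEquivToStd (ρ i))
    (t : Fin r → ℕ) (ht : ∀ i, 1 ≤ t i ∧ t i ≤ (p - 1) / 2) :
    ∃ x : ZMod p → EuclideanSpace ℝ (Fin d),
      Function.Injective x ∧
      ∀ i : Fin r, ∀ k : ZMod p,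
        ρ i (x (k * (t i : ZMod p))) (x ((k + 1) * (t i : ZMod p))) =
          ρ i (x 0) (x (t i : ZMod p)) := by
  have : Fact p.Prime := ⟨hp⟩
  have hrank : (Nat.card (Fin r) : Cardinal) < Module.rank ℝ (EuclideanSpace ℝ (Fin d)) := by
    rw [← Module.finrank_eq_rank]
    simpa using hdr
  exact exists_pgons_equilateral_general hrank (fun i ↦ (hρ i).continuous)
    fun i ↦ (t i : ZMod p)
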